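/- arXiv:0811.1328 — 4 statements merged into one kernel-verified Lean document; each statement's English description precedes it below -/
import Mathlib

section
/- Let Q be a finite quiver without loops, and let Δ be an admissible cut of Q. Suppose Q contains, as a full subquiver, a quiver G of the following shape (for some integers a, b ≥ 2): pairwise distinct vertices v_1, v_2, …, v_{a+1} and v'_2, …, v'_b, arrows v_i → v_{i+1} for i = 1, …, a (the upper path), arrows v_1 → v'_2, v'_j → v'_{j+1} for j = 2, …, b−1, and v'_b → v_{a+1} (the lower path), one further arrow η: v_{a+1} → v_1, and no other arrows between these vertices. Then either η belongs to Δ and no arrow of the upper or lower path belongs to Δ, or η does not belong to Δ and Δ contains exactly one arrow of the upper path and exactly one arrow of the lower path. -/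
/-!
Each of the two paths of `G(a,b)`, closed up by `η`, is the full subquiver on its vertex set, and is
an oriented chordless cycle: the other path meets this vertex set only in its two end points, and
each of its arrows has an inner vertex of that path as an end point because `a, b ≥ 2`. An
admissible cut contains exactly one arrow of each of the two cycles. This arrow is either `η`, which
is common to both cycles and so excludes all path arrows, or it is a path arrow in both cases.

`closedPath_isOrientedChordlessCycle` shows that a path closed up by an arrow, full on its vertices,
is an oriented chordless cycle, and `closedPath_cut` describes how a cut meets such a cycle.
-/


/-- The set of arrows of the full subquiver of the quiver with arrows `A`,
source map `s` and target map `t`, on the vertex set `S`. -/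
def fullArrows {V A : Type*} [Fintype A] [DecidableEq V] (s t : A → V) (S : Finset V) :
    Finset A :=
  Finset.univ.filter fun a => s a ∈ S ∧ t a ∈ S

/-- Two vertices are joined by an arrow (in either direction) of the full subquiver on `S`. -/
def adjOn {V A : Type*} [Fintype A] [DecidableEq V] (s t : A → V) (S : Finset V)
    (u v : V) : Prop :=
  ∃ a ∈ fullArrows s t S, (s a = u ∧ t a = v) ∨ (s a = v ∧ t a = u)

/-- The vertex set `S` carries a chordless cycle: the full subquiver on `S` is nonempty,
connected, and exactly two of its arrows are incident (as source or target) to each of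
its vertices. -/
def IsChordlessCycle {V A : Type*} [Fintype A] [DecidableEq V] (s t : A → V)
    (S : Finset V) : Prop :=
  S.Nonempty ∧
  (∀ u ∈ S, ∀ v ∈ S, Relation.ReflTransGen (adjOn s t S) u v) ∧
  ∀ v ∈ S, ((fullArrows s t S).filter fun a => s a = v ∨ t a = v).card = 2

/-- The chordless cycle on `S` is oriented: at each vertex exactly one incident arrow
starts there and exactly one ends there. -/
def IsOrientedChordlessCycle {V A : Type*} [Fintype A] [DecidableEq V] (s t : A → V)
    (S : Finset V) : Prop :=
  IsChordlessCycle s t S ∧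
  ∀ v ∈ S, ((fullArrows s t S).filter fun a => s a = v).card = 1 ∧
    ((fullArrows s t S).filter fun a => t a = v).card = 1

/-- An admissible cut: a set of arrows containing exactly one arrow of each oriented
chordless cycle of the quiver. -/
def IsAdmissibleCut {V A : Type*} [Fintype A] [DecidableEq V] [DecidableEq A]
    (s t : A → V) (Δ : Finset A) : Prop :=
  ∀ S : Finset V, IsOrientedChordlessCycle s t S →
    ((fullArrows s t S).filter fun a => a ∈ Δ).card = 1

/-- `IsPathFrom s t x y l` : the list of arrows `l` is a path from `x` to `y` in the
quiver with source map `s` and target map `t`. -/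
inductive IsPathFrom {V A : Type*} (s t : A → V) : V → V → List A → Prop
  | nil (v : V) : IsPathFrom s t v v []
  | cons {u w : V} {a : A} {l : List A} (h1 : s a = u) (h2 : IsPathFrom s t (t a) w l) :
      IsPathFrom s t u w (a :: l)

section ClosedPath

variable {V A : Type*} [DecidableEq V] [Fintype A]
  {s t : A → V} {m : ℕ} {x : ℕ → V} {p : ℕ → A} {η : A}

lemma closedPath_fullArrows
    (hp : ∀ i ∈ Finset.Icc 1 m, s (p i) = x i ∧ t (p i) = x (i + 1))
    (hη : s η = x (m + 1) ∧ t η = x 1)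
    (hfull : ∀ e : A, s e ∈ (Finset.Icc 1 (m + 1)).image x →
      t e ∈ (Finset.Icc 1 (m + 1)).image x → e = η ∨ ∃ i ∈ Finset.Icc 1 m, e = p i) (e : A) :
    e ∈ fullArrows s t ((Finset.Icc 1 (m + 1)).image x) ↔
      e = η ∨ ∃ i ∈ Finset.Icc 1 m, e = p i := by
  simp only [fullArrows, Finset.mem_filter, Finset.mem_univ, true_and]
  refine ⟨fun h => hfull e h.1 h.2, ?_⟩
  rintro (rfl | ⟨i, hi, rfl⟩)
  · rw [hη.1, hη.2]
    exact ⟨Finset.mem_image_of_mem _ (by simp), Finset.mem_image_of_mem _ (by simp)⟩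
  · rw [(hp i hi).1, (hp i hi).2]
    rw [Finset.mem_Icc] at hi
    exact ⟨Finset.mem_image_of_mem _ (Finset.mem_Icc.2 (by omega)),
      Finset.mem_image_of_mem _ (Finset.mem_Icc.2 (by omega))⟩

/-- A path `x 1 → ⋯ → x (m + 1)` with distinct vertices, together with an arrow
`η : x (m + 1) → x 1`, is an oriented chordless cycle if there are no further arrows between
its vertices. -/
lemma closedPath_isOrientedChordlessCycle [DecidableEq A] (hnoloop : ∀ a : A, s a ≠ t a)
    (hinj : ∀ i ∈ Finset.Icc 1 (m + 1), ∀ j ∈ Finset.Icc 1 (m + 1), x i = x j → i = j)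
    (hp : ∀ i ∈ Finset.Icc 1 m, s (p i) = x i ∧ t (p i) = x (i + 1))
    (hη : s η = x (m + 1) ∧ t η = x 1)
    (hfull : ∀ e : A, s e ∈ (Finset.Icc 1 (m + 1)).image x →
      t e ∈ (Finset.Icc 1 (m + 1)).image x → e = η ∨ ∃ i ∈ Finset.Icc 1 m, e = p i) :
    IsOrientedChordlessCycle s t ((Finset.Icc 1 (m + 1)).image x) := by
  have hmem := closedPath_fullArrows hp hη hfull
  set S := (Finset.Icc 1 (m + 1)).image x with hS
  simp only [Finset.mem_Icc] at hinj hp hmem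
  have hdeg : ∀ u ∈ S, ((fullArrows s t S).filter fun a => s a = u).card = 1 ∧
      ((fullArrows s t S).filter fun a => t a = u).card = 1 := by
    intro u hu
    obtain ⟨i, hi, rfl⟩ := Finset.mem_image.1 hu
    rw [Finset.mem_Icc] at hi
    constructor
    · rw [Finset.card_eq_one]
      by_cases him : i = m + 1
      · refine ⟨η, ?_⟩
        ext e
        simp only [Finset.mem_filter, Finset.mem_singleton, hmem]
        constructor
        · rintro ⟨rfl | ⟨j, hj, rfl⟩, he⟩
          · rfl
          · rw [(hp j hj).1] at he
            have := hinj j (by omega) i (by omega) he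
            omega
        · rintro rfl
          exact ⟨Or.inl rfl, by rw [hη.1, him]⟩
      · refine ⟨p i, ?_⟩
        ext e
        simp only [Finset.mem_filter, Finset.mem_singleton, hmem]
        constructor
        · rintro ⟨rfl | ⟨j, hj, rfl⟩, he⟩
          · rw [hη.1] at he
            have := hinj (m + 1) (by omega) i (by omega) he
            omega
          · rw [(hp j hj).1] at he
            rw [hinj j (by omega) i (by omega) he]
        · rintro rfl
          exact ⟨Or.inr ⟨i, by omega, rfl⟩, (hp i (by omega)).1⟩
    · rw [Finset.card_eq_one]
      by_cases hi1 : i = 1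
      · refine ⟨η, ?_⟩
        ext e
        simp only [Finset.mem_filter, Finset.mem_singleton, hmem]
        constructor
        · rintro ⟨rfl | ⟨j, hj, rfl⟩, he⟩
          · rfl
          · rw [(hp j hj).2] at he
            have := hinj (j + 1) (by omega) i (by omega) he
            omega
        · rintro rfl
          exact ⟨Or.inl rfl, by rw [hη.2, hi1]⟩
      · obtain ⟨k, rfl⟩ : ∃ k, i = k + 1 := ⟨i - 1, by omega⟩
        refine ⟨p k, ?_⟩
        ext e
        simp only [Finset.mem_filter, Finset.mem_singleton, hmem]
        constructor
        · rintro ⟨rfl | ⟨j, hj, rfl⟩, he⟩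
          · rw [hη.2] at he
            have := hinj 1 (by omega) (k + 1) (by omega) he
            omega
          · rw [(hp j hj).2] at he
            have := hinj (j + 1) (by omega) (k + 1) (by omega) he
            obtain rfl : j = k := by omega
            rfl
        · rintro rfl
          exact ⟨Or.inr ⟨k, by omega, rfl⟩, (hp k (by omega)).2⟩
  have hsymm : Std.Symm (adjOn s t S) := ⟨fun u v ⟨e, he, h⟩ => ⟨e, he, h.symm⟩⟩
  have hreach : ∀ i, 1 ≤ i → i ≤ m + 1 → Relation.ReflTransGen (adjOn s t S) (x 1) (x i) := by
    intro i hi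
    induction i, hi using Nat.le_induction with
    | base => intro _; exact Relation.ReflTransGen.refl
    | succ k hk ih =>
      intro hkm
      exact (ih (by omega)).tail ⟨p k, (hmem _).2 (Or.inr ⟨k, by omega, rfl⟩),
        Or.inl (hp k (by omega))⟩
  refine ⟨⟨⟨x 1, Finset.mem_image_of_mem _ (by simp)⟩, ?_, ?_⟩, hdeg⟩
  · intro u hu u' hu'
    obtain ⟨i, hi, rfl⟩ := Finset.mem_image.1 hu
    obtain ⟨j, hj, rfl⟩ := Finset.mem_image.1 hu'
    rw [Finset.mem_Icc] at hi hj
    exact (Relation.ReflTransGen.stdSymm.symm _ _ (hreach i hi.1 hi.2)).trans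
      (hreach j hj.1 hj.2)
  · intro u hu
    -- without loops, no arrow is counted twice
    rw [Finset.filter_or, Finset.card_union_of_disjoint, (hdeg u hu).1, (hdeg u hu).2]
    rw [Finset.disjoint_filter]
    intro e _ h1 h2
    exact hnoloop e (h1.trans h2.symm)

lemma closedPath_cut [DecidableEq A] (hnoloop : ∀ a : A, s a ≠ t a)
    {Δ : Finset A} (hΔ : IsAdmissibleCut s t Δ)
    (hinj : ∀ i ∈ Finset.Icc 1 (m + 1), ∀ j ∈ Finset.Icc 1 (m + 1), x i = x j → i = j)
    (hp : ∀ i ∈ Finset.Icc 1 m, s (p i) = x i ∧ t (p i) = x (i + 1))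
    (hη : s η = x (m + 1) ∧ t η = x 1)
    (hfull : ∀ e : A, s e ∈ (Finset.Icc 1 (m + 1)).image x →
      t e ∈ (Finset.Icc 1 (m + 1)).image x → e = η ∨ ∃ i ∈ Finset.Icc 1 m, e = p i) :
    (η ∈ Δ ∧ ∀ i ∈ Finset.Icc 1 m, p i ∉ Δ) ∨
      (η ∉ Δ ∧ ((Finset.Icc 1 m).filter fun i => p i ∈ Δ).card = 1) := by
  have hmem := closedPath_fullArrows hp hη hfull
  obtain ⟨c, hc⟩ := Finset.card_eq_one.1
    (hΔ _ (closedPath_isOrientedChordlessCycle hnoloop hinj hp hη hfull))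
  have hcut : ∀ e, ((e = η ∨ ∃ i ∈ Finset.Icc 1 m, e = p i) ∧ e ∈ Δ) ↔ e = c := by
    intro e
    rw [← hmem, ← Finset.mem_filter, hc, Finset.mem_singleton]
  simp only [Finset.mem_Icc] at hinj hp hcut ⊢
  obtain ⟨hc1, hcΔ⟩ := (hcut c).2 rfl
  rcases hc1 with rfl | ⟨k, hk, rfl⟩
  · refine Or.inl ⟨hcΔ, fun i hi hiΔ => ?_⟩
    have hic := (hcut (p i)).1 ⟨Or.inr ⟨i, hi, rfl⟩, hiΔ⟩
    -- `η` and `p i` have different targets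
    have := hinj (i + 1) (by omega) 1 (by omega) (by rw [← (hp i hi).2, hic, hη.2])
    omega
  · refine Or.inr ⟨fun hηΔ => ?_, Finset.card_eq_one.2 ⟨k, ?_⟩⟩
    · have hηk := (hcut η).1 ⟨Or.inl rfl, hηΔ⟩
      have := hinj (k + 1) (by omega) 1 (by omega) (by rw [← (hp k hk).2, ← hηk, hη.2])
      omega
    · ext i
      simp only [Finset.mem_filter, Finset.mem_Icc, Finset.mem_singleton]
      constructor
      · rintro ⟨hi, hiΔ⟩
        have hik := (hcut (p i)).1 ⟨Or.inr ⟨i, hi, rfl⟩, hiΔ⟩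
        exact hinj i (by omega) k (by omega) (by rw [← (hp i hi).1, hik, (hp k hk).1])
      · rintro rfl
        exact ⟨hk, hcΔ⟩

end ClosedPath

/-- if a finite loopless quiver `Q` with an admissible cut `Δ` contains the
quiver `G(a,b)` as a full subquiver (upper path `v 1 → v 2 → … → v (a+1)`, lower path
`v 1 → w 2 → … → w b → v (a+1)`, and one further arrow `η : v (a+1) → v 1`, with no other
arrows between these vertices), then either `η ∈ Δ` and no arrow of the upper or lower
path lies in `Δ`, or `η ∉ Δ` and `Δ` contains exactly one arrow of the upper path and
exactly one arrow of the lower path. -/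
theorem stmt_4 {V A : Type*} [Fintype V] [DecidableEq V] [Fintype A] [DecidableEq A]
    (s t : A → V) (hnoloop : ∀ a : A, s a ≠ t a)
    (Δ : Finset A) (hΔ : IsAdmissibleCut s t Δ)
    (a b : ℕ) (ha : 2 ≤ a) (hb : 2 ≤ b)
    (v w : ℕ → V)
    -- the vertices `v 1, …, v (a+1), w 2, …, w b` are pairwise distinct
    (hvinj : ∀ i ∈ Finset.Icc 1 (a + 1), ∀ j ∈ Finset.Icc 1 (a + 1), v i = v j → i = j)
    (hwinj : ∀ i ∈ Finset.Icc 2 b, ∀ j ∈ Finset.Icc 2 b, w i = w j → i = j)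
    (hvw : ∀ i ∈ Finset.Icc 1 (a + 1), ∀ j ∈ Finset.Icc 2 b, v i ≠ w j)
    (up lo : ℕ → A) (η : A)
    -- the upper path `v 1 → v 2 → … → v (a+1)`
    (hup : ∀ i ∈ Finset.Icc 1 a, s (up i) = v i ∧ t (up i) = v (i + 1))
    -- the lower path `v 1 → w 2 → … → w b → v (a+1)`
    (hlo1 : s (lo 1) = v 1 ∧ t (lo 1) = w 2)
    (hlomid : ∀ j ∈ Finset.Icc 2 (b - 1), s (lo j) = w j ∧ t (lo j) = w (j + 1))
    (hlob : s (lo b) = w b ∧ t (lo b) = v (a + 1))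
    -- the further arrow `η : v (a+1) → v 1`
    (hη : s η = v (a + 1) ∧ t η = v 1)
    -- no other arrows between these vertices (the subquiver is full)
    (hfull : ∀ e : A,
      s e ∈ (Finset.Icc 1 (a + 1)).image v ∪ (Finset.Icc 2 b).image w →
      t e ∈ (Finset.Icc 1 (a + 1)).image v ∪ (Finset.Icc 2 b).image w →
      e = η ∨ (∃ i ∈ Finset.Icc 1 a, e = up i) ∨ (∃ j ∈ Finset.Icc 1 b, e = lo j)) :
    (η ∈ Δ ∧ (∀ i ∈ Finset.Icc 1 a, up i ∉ Δ) ∧ (∀ j ∈ Finset.Icc 1 b, lo j ∉ Δ)) ∨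
    (η ∉ Δ ∧ ((Finset.Icc 1 a).filter fun i => up i ∈ Δ).card = 1 ∧
      ((Finset.Icc 1 b).filter fun j => lo j ∈ Δ).card = 1) := by
  have hloS : ∀ j ∈ Finset.Icc 2 b, s (lo j) = w j := by
    intro j hj
    rw [Finset.mem_Icc] at hj
    by_cases hjb : j = b
    · rw [hjb]; exact hlob.1
    · exact (hlomid j (Finset.mem_Icc.2 (by omega))).1
  have hupper := closedPath_cut (x := v) (p := up) (m := a) hnoloop hΔ hvinj hup hη (by
    intro e hs ht
    rcases hfull e (Finset.mem_union_left _ hs) (Finset.mem_union_left _ ht) with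
      h | h | ⟨j, hj, rfl⟩
    · exact Or.inl h
    · exact Or.inr h
    · -- an arrow of the lower path has an inner vertex of that path as an end point
      exfalso
      rw [Finset.mem_Icc] at hj
      by_cases hj1 : j = 1
      · subst hj1
        obtain ⟨i, hi, h⟩ := Finset.mem_image.1 ht
        exact hvw i hi 2 (Finset.mem_Icc.2 (by omega)) (h.trans hlo1.2)
      · have hj2 : j ∈ Finset.Icc 2 b := Finset.mem_Icc.2 (by omega)
        obtain ⟨i, hi, h⟩ := Finset.mem_image.1 hs
        exact hvw i hi j hj2 (h.trans (hloS j hj2)))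
  -- the vertices of the lower path, numbered from `1` to `b + 1`
  obtain ⟨y, hy⟩ : ∃ y : ℕ → V, y = fun j => if j = 1 then v 1 else
    if j = b + 1 then v (a + 1) else w j := ⟨_, rfl⟩
  have hy1 : y 1 = v 1 := by simp [hy]
  have hyb : y (b + 1) = v (a + 1) := by
    have : b ≠ 0 := by omega
    simp [hy, this]
  have hyw : ∀ j ∈ Finset.Icc 2 b, y j = w j := by
    intro j hj
    rw [Finset.mem_Icc] at hj
    have h1 : j ≠ 1 := by omega
    have h2 : j ≠ b + 1 := by omega
    simp [hy, h1, h2]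
  have hcases : ∀ j ∈ Finset.Icc 1 (b + 1), j = 1 ∨ j = b + 1 ∨ j ∈ Finset.Icc 2 b := by
    intro j hj
    rw [Finset.mem_Icc] at hj ⊢
    omega
  have m1 : 1 ∈ Finset.Icc 1 (a + 1) := Finset.mem_Icc.2 (by omega)
  have ma : a + 1 ∈ Finset.Icc 1 (a + 1) := Finset.mem_Icc.2 (by omega)
  have hends : v 1 ≠ v (a + 1) := fun h => by
    have := hvinj _ m1 _ ma h
    omega
  have hyinj : ∀ i ∈ Finset.Icc 1 (b + 1), ∀ j ∈ Finset.Icc 1 (b + 1), y i = y j → i = j := by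
    intro i hi j hj hij
    rcases hcases i hi with rfl | rfl | hi' <;> rcases hcases j hj with rfl | rfl | hj'
    · rfl
    · rw [hy1, hyb] at hij; exact absurd hij hends
    · rw [hy1, hyw j hj'] at hij; exact absurd hij (hvw _ m1 _ hj')
    · rw [hy1, hyb] at hij; exact absurd hij.symm hends
    · rfl
    · rw [hyb, hyw j hj'] at hij; exact absurd hij (hvw _ ma _ hj')
    · rw [hy1, hyw i hi'] at hij; exact absurd hij.symm (hvw _ m1 _ hi')
    · rw [hyb, hyw i hi'] at hij; exact absurd hij.symm (hvw _ ma _ hi')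
    · rw [hyw i hi', hyw j hj'] at hij; exact hwinj i hi' j hj' hij
  have hlo : ∀ j ∈ Finset.Icc 1 b, s (lo j) = y j ∧ t (lo j) = y (j + 1) := by
    intro j hj
    rw [Finset.mem_Icc] at hj
    by_cases hj1 : j = 1
    · subst hj1
      rw [hy1, hyw 2 (Finset.mem_Icc.2 (by omega))]
      exact hlo1
    · by_cases hjb : j = b
      · subst hjb
        rw [hyb, hyw j (Finset.mem_Icc.2 (by omega))]
        exact hlob
      · rw [hyw j (Finset.mem_Icc.2 (by omega)), hyw (j + 1) (Finset.mem_Icc.2 (by omega))]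
        exact hlomid j (Finset.mem_Icc.2 (by omega))
  have hysub : (Finset.Icc 1 (b + 1)).image y ⊆
      (Finset.Icc 1 (a + 1)).image v ∪ (Finset.Icc 2 b).image w := by
    intro u hu
    obtain ⟨j, hj, rfl⟩ := Finset.mem_image.1 hu
    rcases hcases j hj with rfl | rfl | hj'
    · rw [hy1]; exact Finset.mem_union_left _ (Finset.mem_image_of_mem _ m1)
    · rw [hyb]; exact Finset.mem_union_left _ (Finset.mem_image_of_mem _ ma)
    · rw [hyw j hj']; exact Finset.mem_union_right _ (Finset.mem_image_of_mem _ hj')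
  have hinner : ∀ i, 2 ≤ i → i ≤ a → v i ∉ (Finset.Icc 1 (b + 1)).image y := by
    intro i hi hia hmem
    have mi : i ∈ Finset.Icc 1 (a + 1) := Finset.mem_Icc.2 (by omega)
    obtain ⟨j, hj, h⟩ := Finset.mem_image.1 hmem
    rcases hcases j hj with rfl | rfl | hj'
    · rw [hy1] at h
      have := hvinj _ m1 _ mi h
      omega
    · rw [hyb] at h
      have := hvinj _ ma _ mi h
      omega
    · rw [hyw j hj'] at h
      exact hvw _ mi _ hj' h.symm
  have hlower := closedPath_cut (x := y) (p := lo) (m := b) (η := η) hnoloop hΔ hyinj hlo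
    (by rw [hyb, hy1]; exact hη) (by
    intro e hs ht
    rcases hfull e (hysub hs) (hysub ht) with h | ⟨i, hi, rfl⟩ | h
    · exact Or.inl h
    · -- an arrow of the upper path has an inner vertex of that path as an end point
      exfalso
      rw [(hup i hi).1] at hs
      rw [(hup i hi).2] at ht
      rw [Finset.mem_Icc] at hi
      by_cases hi1 : i = 1
      · exact hinner (i + 1) (by omega) (by omega) ht
      · exact hinner i (by omega) (by omega) hs
    · exact Or.inr h)
  rcases hupper with ⟨h1, h2⟩ | ⟨h1, h2⟩ <;> rcases hlower with ⟨h3, h4⟩ | ⟨h3, h4⟩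
  · exact Or.inl ⟨h1, h2, h4⟩
  · exact absurd h1 h3
  · exact absurd h3 h1
  · exact Or.inr ⟨h1, h2, h4⟩
end

section
/- Consider the quiver Q with eleven vertices 1, 2, …, 11 and the sixteen arrows α₁: 1 → 2, α₂: 2 → 3, α₃: 3 → 1, γ: 6 → 7, β₁: 2 → 9, β'₁: 9 → 6, δ₁: 7 → 4, δ'₁: 4 → 1, β₂: 3 → 10, β'₂: 10 → 6, δ₂: 7 → 8, δ'₂: 8 → 2, β₃: 1 → 5, β'₃: 5 → 6, δ₃: 7 → 11, δ'₃: 11 → 3. Then Q admits no admissible cut; that is, there is no set of arrows of Q containing exactly one arrow of each oriented chordless cycle of Q. (The oriented chordless cycles of Q are exactly the cycles α₃α₂α₁, δ'ᵢδᵢγβ'ᵢβᵢ for i = 1, 2, 3, and δ'_{i+1}δ_{i+1}γβ'ᵢβᵢ for i = 1, 2, 3, indices taken modulo 3 with αᵢ connecting the outer triangle 1, 2, 3.) -/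
/-- The source map of the quiver of the paper's example: vertices `1, …, 11` are encoded
as `0, …, 10 : Fin 11`, and the sixteen arrows are, in order,
`α₁ : 1→2, α₂ : 2→3, α₃ : 3→1, γ : 6→7, β₁ : 2→9, β'₁ : 9→6, δ₁ : 7→4, δ'₁ : 4→1,
β₂ : 3→10, β'₂ : 10→6, δ₂ : 7→8, δ'₂ : 8→2, β₃ : 1→5, β'₃ : 5→6, δ₃ : 7→11, δ'₃ : 11→3`. -/
def exSource : Fin 16 → Fin 11 :=
  ![0, 1, 2, 5, 1, 8, 6, 3, 2, 9, 6, 7, 0, 4, 6, 10]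

/-- The target map of the quiver of the paper's example. -/
def exTarget : Fin 16 → Fin 11 :=
  ![1, 2, 0, 6, 8, 5, 3, 0, 9, 5, 7, 1, 4, 5, 10, 2]

instance adjOnDecidable {V A : Type*} [Fintype A] [DecidableEq V] (s t : A → V) (S : Finset V) :
    DecidableRel (adjOn s t S) := fun u v => by
  unfold adjOn
  infer_instance

lemma adjOn_symm {V A : Type*} [Fintype A] [DecidableEq V] (s t : A → V) (S : Finset V) :
    Std.Symm (adjOn s t S) :=
  ⟨fun _ _ ⟨a, ha, h⟩ => ⟨a, ha, h.symm⟩⟩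

lemma reflTransGen_of_isChain_cons {V : Type*} {R : V → V → Prop} :
    ∀ (l : List V) (x : V), (x :: l).IsChain R → ∀ y ∈ x :: l, Relation.ReflTransGen R x y
  | [], x, _, y, hy => by
    obtain rfl : y = x := by simpa using hy
    exact .refl
  | z :: l, x, h, y, hy => by
    rw [List.isChain_cons_cons] at h
    rcases List.mem_cons.1 hy with rfl | hy
    · exact .refl
    · exact .head h.1 (reflTransGen_of_isChain_cons l z h.2 y hy)

/-- A criterion with decidable hypotheses: connectedness is replaced by a list of the vertices
in which consecutive entries are adjacent. -/
lemma isOrientedChordlessCycle_of_isChain {V A : Type*} [Fintype A] [DecidableEq V]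
    (s t : A → V) (x : V) (l : List V)
    (hchain : (x :: l).IsChain (adjOn s t (x :: l).toFinset))
    (hdeg : ∀ v ∈ (x :: l).toFinset,
      ((fullArrows s t (x :: l).toFinset).filter fun a => s a = v ∨ t a = v).card = 2 ∧
      ((fullArrows s t (x :: l).toFinset).filter fun a => s a = v).card = 1 ∧
      ((fullArrows s t (x :: l).toFinset).filter fun a => t a = v).card = 1) :
    IsOrientedChordlessCycle s t (x :: l).toFinset := by
  refine ⟨⟨⟨x, by simp⟩, fun u hu v hv => ?_, fun v hv => (hdeg v hv).1⟩,
    fun v hv => (hdeg v hv).2⟩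
  have hreach := reflTransGen_of_isChain_cons l x hchain
  have := adjOn_symm s t (x :: l).toFinset
  exact (Relation.ReflTransGen.stdSymm.symm _ _ (hreach u (List.mem_toFinset.1 hu))).trans (hreach v (List.mem_toFinset.1 hv))

/-- If `x :: l` lists the vertices of an oriented chordless cycle whose arrows are `C`, then
the indicator function of an admissible cut sums to `1` over `C`. -/
lemma sum_cut_eq_one {Δ : Finset (Fin 16)} (hΔ : IsAdmissibleCut exSource exTarget Δ)
    (x : Fin 11) (l : List (Fin 11)) (C : Finset (Fin 16))
    (hC : fullArrows exSource exTarget (x :: l).toFinset = C)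
    (hcyc : IsOrientedChordlessCycle exSource exTarget (x :: l).toFinset) :
    ∑ a ∈ C, (if a ∈ Δ then 1 else 0) = 1 := by
  rw [← Finset.card_filter, ← hC]
  exact hΔ _ hcyc

set_option maxRecDepth 100000 in
/-- the quiver with eleven vertices and sixteen arrows described above
admits no admissible cut. -/
theorem stmt_5 : ¬ ∃ Δ : Finset (Fin 16), IsAdmissibleCut exSource exTarget Δ := by
  rintro ⟨Δ, hΔ⟩
  -- the triangle
  have h0 := sum_cut_eq_one hΔ 0 [1, 2] {0, 1, 2} (by decide)
    (isOrientedChordlessCycle_of_isChain _ _ _ _ (by decide) (by decide))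
  -- the cycles through `αᵢ, βᵢ, β'ᵢ, γ, δᵢ, δ'ᵢ`
  have h1 := sum_cut_eq_one hΔ 0 [1, 8, 5, 6, 3] {0, 4, 5, 3, 6, 7} (by decide)
    (isOrientedChordlessCycle_of_isChain _ _ _ _ (by decide) (by decide))
  have h2 := sum_cut_eq_one hΔ 1 [2, 9, 5, 6, 7] {1, 8, 9, 3, 10, 11} (by decide)
    (isOrientedChordlessCycle_of_isChain _ _ _ _ (by decide) (by decide))
  have h3 := sum_cut_eq_one hΔ 2 [0, 4, 5, 6, 10] {2, 12, 13, 3, 14, 15} (by decide)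
    (isOrientedChordlessCycle_of_isChain _ _ _ _ (by decide) (by decide))
  -- the cycles through `βᵢ, β'ᵢ, γ, δᵢ₊₁, δ'ᵢ₊₁`
  have h4 := sum_cut_eq_one hΔ 1 [8, 5, 6, 7] {4, 5, 3, 10, 11} (by decide)
    (isOrientedChordlessCycle_of_isChain _ _ _ _ (by decide) (by decide))
  have h5 := sum_cut_eq_one hΔ 2 [9, 5, 6, 10] {8, 9, 3, 14, 15} (by decide)
    (isOrientedChordlessCycle_of_isChain _ _ _ _ (by decide) (by decide))
  have h6 := sum_cut_eq_one hΔ 0 [4, 5, 6, 3] {12, 13, 3, 6, 7} (by decide)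
    (isOrientedChordlessCycle_of_isChain _ _ _ _ (by decide) (by decide))
  generalize (fun a => if a ∈ Δ then 1 else 0 : Fin 16 → ℕ) = f at h0 h1 h2 h3 h4 h5 h6
  simp +decide only [Finset.sum_insert, Finset.sum_singleton, Finset.mem_insert,
    Finset.mem_singleton, not_false_eq_true] at h0 h1 h2 h3 h4 h5 h6
  omega
end

section
/- Let Q be a finite connected quiver with vertex set {1, …, n}, without loops, with at most one arrow between any two vertices (in either direction), and in which every chordless cycle is oriented. Assume that Q admits a positive definite quasi-Cartan companion. Let Δ be an admissible cut of Q, and define the symmetric integer n×n matrix B by: B_ii = 2 for all i; for i ≠ j joined by an arrow of Q, B_ij = B_ji = 1 if that arrow belongs to Δ and B_ij = B_ji = −1 otherwise; and B_ij = 0 if there is no arrow between i and j. Then B is positive definite. -/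
/-- A quasi-Cartan companion of a quiver (with no loops and at most one arrow between
any two vertices): a symmetric integer matrix with `2` on the diagonal, entries of
absolute value `1` at pairs of vertices joined by an arrow, and `0` elsewhere. -/
def IsQuasiCartanCompanion {V A : Type*} (s t : A → V) (M : Matrix V V ℤ) : Prop :=
  (∀ i j, M i j = M j i) ∧ (∀ i, M i i = 2) ∧
  ∀ i j, i ≠ j →
    ((∃ a : A, (s a = i ∧ t a = j) ∨ (s a = j ∧ t a = i)) →
      (M i j = 1 ∨ M i j = -1)) ∧
    ((¬ ∃ a : A, (s a = i ∧ t a = j) ∨ (s a = j ∧ t a = i)) → M i j = 0)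

/-- A symmetric integer matrix is positive definite:
`xᵀ M x > 0` for every nonzero (integer) vector `x`. -/
def PosDefInt {V : Type*} [Fintype V] (M : Matrix V V ℤ) : Prop :=
  ∀ x : V → ℤ, x ≠ 0 → 0 < ∑ i, ∑ j, M i j * x i * x j

/-- `B` and `M` are symmetric matrices with diagonal `2` and off-diagonal entries `0`, `1`, `-1`
having the same zero pattern, i.e. two quasi-Cartan companions of a common graph. -/
structure Companions {V : Type*} (B M : Matrix V V ℤ) : Prop where
  symmB : ∀ i j, B i j = B j i
  symmM : ∀ i j, M i j = M j i
  diagB : ∀ i, B i i = 2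
  diagM : ∀ i, M i i = 2
  off : ∀ i j, i ≠ j → (B i j = 0 ∧ M i j = 0) ∨
    ((B i j = 1 ∨ B i j = -1) ∧ (M i j = 1 ∨ M i j = -1))

/-- On the vertex set `S`, the matrix `B` arises from `M` by a change of signs of the basis
vectors. -/
def SignBalanced {V : Type*} (B M : Matrix V V ℤ) (S : Finset V) : Prop :=
  ∃ d : V → ℤ, (∀ i, d i = 1 ∨ d i = -1) ∧ ∀ i ∈ S, ∀ j ∈ S, B i j = d i * d j * M i j

/-! ### Sign changes and minimal unbalanced sets -/

section Signs

variable {V : Type*} [DecidableEq V] {B M : Matrix V V ℤ}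

lemma Companions.ne_zero_iff (h : Companions B M) (i j : V) : B i j ≠ 0 ↔ M i j ≠ 0 := by
  by_cases hij : i = j
  · subst hij; simp [h.diagB, h.diagM]
  · rcases h.off i j hij with ⟨h1, h2⟩ | ⟨h1 | h1, h2 | h2⟩ <;> simp [h1, h2]

/-- Balanced sets sharing at most one vertex, with no other edge between them, have a balanced
union: the two choices of signs can be made to agree at the common vertex. -/
lemma SignBalanced.glue (h : Companions B M) {S T : Finset V} (v : V)
    (hS : SignBalanced B M S) (hT : SignBalanced B M T)
    (hv : ∀ i ∈ S, i ∈ T → i = v)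
    (hz : ∀ i ∈ S, i ∉ T → ∀ j ∈ T, j ∉ S → B i j = 0) : SignBalanced B M (S ∪ T) := by
  obtain ⟨d, hd, hdS⟩ := hS
  obtain ⟨e, he, heT⟩ := hT
  let f : V → ℤ := fun i => if i ∈ S then d i else d v * e v * e i
  have fS : ∀ i ∈ S, f i = d i := fun i hi => by simp [f, hi]
  have fT : ∀ i ∈ T, f i = d v * e v * e i := by
    intro i hi
    by_cases hiS : i ∈ S
    · have := hv i hiS hi
      subst this
      rcases he i with h1 | h1 <;> simp [f, hiS, h1]
    · simp [f, hiS]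
  have hzz : ∀ i ∈ S, i ∉ T → ∀ j ∈ T, j ∉ S → B i j = 0 ∧ M i j = 0 := by
    intro i hi hi' j hj hj'
    have h0 := hz i hi hi' j hj hj'
    exact ⟨h0, by_contra fun hM => (h.ne_zero_iff i j).2 hM h0⟩
  have hTT : ∀ i ∈ T, ∀ j ∈ T, B i j = f i * f j * M i j := by
    intro i hi j hj
    rw [fT i hi, fT j hj, heT i hi j hj]
    rcases hd v with h1 | h1 <;> rcases he v with h2 | h2 <;> simp [h1, h2]
  refine ⟨f, ?_, ?_⟩
  · intro i
    by_cases hi : i ∈ S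
    · rw [fS i hi]; exact hd i
    · simp only [f, hi, if_false]
      rcases hd v with h1 | h1 <;> rcases he v with h2 | h2 <;> rcases he i with h3 | h3 <;>
        simp [h1, h2, h3]
  · intro i hi j hj
    by_cases hiS : i ∈ S <;> by_cases hjS : j ∈ S
    · rw [fS i hiS, fS j hjS]; exact hdS i hiS j hjS
    · have hjT : j ∈ T := by simpa [hjS] using hj
      by_cases hiT : i ∈ T
      · exact hTT i hiT j hjT
      · simp [hzz i hiS hiT j hjT hjS]
    · have hiT : i ∈ T := by simpa [hiS] using hi
      by_cases hjT : j ∈ T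
      · exact hTT i hiT j hjT
      · have := hzz j hjS hjT i hiT hiS
        rw [h.symmB, h.symmM i j]; simp [this]
    · exact hTT i (by simpa [hiS] using hi) j (by simpa [hjS] using hj)

/-- A minimal unbalanced set stays connected after removal of a vertex `v`. -/
lemma exists_edge_of_minimal (h : Companions B M) {S : Finset V} (hS : ¬ SignBalanced B M S)
    (hmin : ∀ T, T ⊂ S → SignBalanced B M T) {v : V} (hv : v ∈ S) {K : Finset V}
    (hK : K ⊆ S.erase v) {c a : V} (hc : c ∈ K) (ha : a ∈ S.erase v) (haK : a ∉ K) :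
    ∃ u ∈ K, ∃ w ∈ S.erase v, w ∉ K ∧ B u w ≠ 0 := by
  by_contra hcon
  push Not at hcon
  have hvK : v ∉ K := fun hvK => by simpa using hK hvK
  have haS : a ∈ S := Finset.mem_of_mem_erase ha
  have hav : a ≠ v := Finset.ne_of_mem_erase ha
  have hcS : c ∈ S := Finset.mem_of_mem_erase (hK hc)
  have hKS : K ⊆ S := hK.trans (Finset.erase_subset _ _)
  have h1 : SignBalanced B M (insert v K) := by
    refine hmin _ (Finset.ssubset_iff_subset_ne.2 ⟨?_, ?_⟩)
    · exact Finset.insert_subset hv hKS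
    · intro he
      rw [← he] at haS
      simp [hav, haK] at haS
  have h2 : SignBalanced B M (S \ K) := by
    refine hmin _ (Finset.ssubset_iff_subset_ne.2 ⟨Finset.sdiff_subset, ?_⟩)
    intro he
    rw [← he] at hcS
    simp [hc] at hcS
  have h3 := SignBalanced.glue h v h1 h2 (by
    intro i hi hi'
    simp only [Finset.mem_insert, Finset.mem_sdiff] at hi hi'
    tauto) (by
    intro i hi hi' j hj hj'
    simp only [Finset.mem_insert, Finset.mem_sdiff, not_or, not_and, not_not] at hi hi' hj hj'
    rcases hi with rfl | hi
    · exact absurd (hi' hv) hvK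
    · exact hcon i hi j (Finset.mem_erase.2 ⟨hj'.1, hj.1⟩) hj'.2)
  apply hS
  convert h3 using 1
  ext i
  simp only [Finset.mem_union, Finset.mem_insert, Finset.mem_sdiff]
  constructor
  · intro hi; tauto
  · rintro ((rfl | hi) | hi)
    · exact hv
    · exact hKS hi
    · exact hi.1

/-- If two sign changes both turn the nonzero entry `m` into `b`, they agree up to a common
sign. -/
lemma sign_ratio {b m p q p' q' : ℤ} (hp : p = 1 ∨ p = -1) (hq : q = 1 ∨ q = -1)
    (hp' : p' = 1 ∨ p' = -1) (hq' : q' = 1 ∨ q' = -1) (hb : b ≠ 0)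
    (h1 : b = p * q * m) (h2 : b = p' * q' * m) : p' * p = q' * q := by
  rcases hp with rfl | rfl <;> rcases hq with rfl | rfl <;> rcases hp' with rfl | rfl <;>
    rcases hq' with rfl | rfl <;> omega

lemma sign_ratio_neg {b m p q p' q' : ℤ} (hp : p = 1 ∨ p = -1) (hq : q = 1 ∨ q = -1)
    (hp' : p' = 1 ∨ p' = -1) (hq' : q' = 1 ∨ q' = -1) (hb : b ≠ 0)
    (h1 : b = -(p * q * m)) (h2 : b = p' * q' * m) : p' * p = -(q' * q) := by
  rcases hp with rfl | rfl <;> rcases hq with rfl | rfl <;> rcases hp' with rfl | rfl <;>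
    rcases hq' with rfl | rfl <;> omega

/-- In a minimal unbalanced set, signs `d` adapted to `S \ v` fit at most one edge at `v`, given
that some edge `v c` does not fit. Otherwise, let `v a` and `v b` both fit. Among the vertices
other than `v, a, b`, consider those where the signs for `S \ b` and `S \ a` have the same ratio
to `d` as at `c`: an edge of `S \ v` leaving this set ends in `a` or `b`, and then the signs for
`S \ b` or `S \ a` contradict the behaviour of `d` at `v`. -/
lemma fit_unique (h : Companions B M) {S : Finset V} (hS : ¬ SignBalanced B M S)
    (hmin : ∀ T, T ⊂ S → SignBalanced B M T) {v : V} (hv : v ∈ S) {d : V → ℤ}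
    (hd : ∀ i, d i = 1 ∨ d i = -1)
    (hdS : ∀ i ∈ S.erase v, ∀ j ∈ S.erase v, B i j = d i * d j * M i j)
    {a b c : V} (ha : a ∈ S.erase v) (hb : b ∈ S.erase v) (hc : c ∈ S.erase v)
    (ha0 : B v a ≠ 0) (hb0 : B v b ≠ 0) (hc0 : B v c ≠ 0)
    (hva : B v a = d v * d a * M v a) (hvb : B v b = d v * d b * M v b)
    (hvc : B v c = -(d v * d c * M v c)) : a = b := by
  by_contra hab
  have hM := (h.ne_zero_iff v c).1 hc0
  have hcfit : ¬ B v c = d v * d c * M v c := by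
    intro h'; omega
  have hca : c ≠ a := by rintro rfl; exact hcfit hva
  have hcb : c ≠ b := by rintro rfl; exact hcfit hvb
  simp only [Finset.mem_erase] at ha hb hc hdS
  obtain ⟨e, he, heS⟩ := hmin (S.erase b) (Finset.erase_ssubset hb.2)
  obtain ⟨f, hf, hfS⟩ := hmin (S.erase a) (Finset.erase_ssubset ha.2)
  simp only [Finset.mem_erase] at heS hfS
  let K : Finset V := S.filter fun u => u ≠ v ∧ u ≠ a ∧ u ≠ b ∧
    e u * d u = e c * d c ∧ f u * d u = f c * d c
  have hK : K ⊆ S.erase v := by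
    intro u hu
    simp only [K, Finset.mem_filter] at hu
    simp [hu.1, hu.2.1]
  have hcK : c ∈ K := by simp [K, hc, hca, hcb]
  have haK : a ∉ K := by simp [K]
  obtain ⟨u, hu, w, hw, hwK, huw⟩ := exists_edge_of_minimal h hS hmin hv hK hcK
    (Finset.mem_erase.2 ha) haK
  simp only [K, Finset.mem_filter] at hu
  obtain ⟨huS, huv, hua, hub, hu1, hu2⟩ := hu
  simp only [Finset.mem_erase] at hw
  have hdd := hdS u ⟨huv, huS⟩ w hw
  have hcontr : ∀ g : V → ℤ, (∀ i, g i = 1 ∨ g i = -1) → ∀ x, B v x ≠ 0 →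
      B v x = d v * d x * M v x → B v x = g v * g x * M v x → B v c = g v * g c * M v c →
      g x * d x ≠ g c * d c := by
    intro g hg x hx0 hx hgx hgc heq
    have r1 := sign_ratio (hd v) (hd x) (hg v) (hg x) hx0 hx hgx
    have r2 := sign_ratio_neg (hd v) (hd c) (hg v) (hg c) hc0 hvc hgc
    rcases hd c with h1 | h1 <;> rcases hg c with h2 | h2 <;> rw [h1, h2] at r2 heq <;> omega
  by_cases hwa : w = a
  · subst hwa
    have r := sign_ratio (hd u) (hd w) (he u) (he w) huw hdd (heS u ⟨hub, huS⟩ w ⟨hab, hw.2⟩)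
    exact hcontr e he w ha0 hva (heS v ⟨hb.1.symm, hv⟩ w ⟨hab, hw.2⟩)
      (heS v ⟨hb.1.symm, hv⟩ c ⟨hcb, hc.2⟩) (r.symm.trans hu1)
  by_cases hwb : w = b
  · subst hwb
    have r := sign_ratio (hd u) (hd w) (hf u) (hf w) huw hdd (hfS u ⟨hua, huS⟩ w ⟨hwa, hw.2⟩)
    exact hcontr f hf w hb0 hvb (hfS v ⟨ha.1.symm, hv⟩ w ⟨hwa, hw.2⟩)
      (hfS v ⟨ha.1.symm, hv⟩ c ⟨hca, hc.2⟩) (r.symm.trans hu2)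
  apply hwK
  have r1 := sign_ratio (hd u) (hd w) (he u) (he w) huw hdd (heS u ⟨hub, huS⟩ w ⟨hwb, hw.2⟩)
  have r2 := sign_ratio (hd u) (hd w) (hf u) (hf w) huw hdd (hfS u ⟨hua, huS⟩ w ⟨hwa, hw.2⟩)
  simp only [K, Finset.mem_filter]
  exact ⟨hw.2, hw.1, hwa, hwb, r1.symm.trans hu1, r2.symm.trans hu2⟩

/-- Changing the sign at `v` exchanges the edges at `v` that fit and those that do not. -/
lemma flip_signs {d : V → ℤ} (hd : ∀ i, d i = 1 ∨ d i = -1) (v : V) :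
    ∃ e : V → ℤ, (∀ i, e i = 1 ∨ e i = -1) ∧ e v = - d v ∧ ∀ i, i ≠ v → e i = d i := by
  refine ⟨Function.update d v (-d v), ?_, by simp, fun i hi => by simp [hi]⟩
  intro i
  by_cases hi : i = v
  · subst hi
    rcases hd i with h1 | h1 <;> simp [h1]
  · simpa [hi] using hd i

lemma Companions.fit_or (h : Companions B M) {d : V → ℤ} (hd : ∀ i, d i = 1 ∨ d i = -1)
    {i j : V} (hij : i ≠ j) :
    B i j = d i * d j * M i j ∨ B i j = -(d i * d j * M i j) := by
  rcases h.off i j hij with ⟨h1, h2⟩ | ⟨h1 | h1, h2 | h2⟩ <;> rcases hd i with h3 | h3 <;>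
    rcases hd j with h4 | h4 <;> simp [h1, h2, h3, h4]

/-- In a minimal unbalanced set every vertex `v` has exactly two neighbours: signs for `S \ v`
fit exactly one of the two edges at `v`. -/
lemma minimal_nbrs (h : Companions B M) {S : Finset V} (hS : ¬ SignBalanced B M S)
    (hmin : ∀ T, T ⊂ S → SignBalanced B M T) {v : V} (hv : v ∈ S) :
    ∃ d : V → ℤ, (∀ i, d i = 1 ∨ d i = -1) ∧
      (∀ i ∈ S.erase v, ∀ j ∈ S.erase v, B i j = d i * d j * M i j) ∧
      ∃ a ∈ S.erase v, ∃ b ∈ S.erase v, a ≠ b ∧ B v a ≠ 0 ∧ B v b ≠ 0 ∧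
        B v a = d v * d a * M v a ∧ B v b = -(d v * d b * M v b) ∧
        ∀ u ∈ S.erase v, u ≠ a → u ≠ b → B v u = 0 := by
  obtain ⟨d, hd, hdS⟩ := hmin (S.erase v) (Finset.erase_ssubset hv)
  -- Signs adapted to `S \ v` cannot fit all edges at `v`.
  have hbad : ∀ e : V → ℤ, (∀ i, e i = 1 ∨ e i = -1) →
      (∀ i ∈ S.erase v, ∀ j ∈ S.erase v, B i j = e i * e j * M i j) →
      ∃ b ∈ S.erase v, B v b ≠ 0 ∧ B v b = -(e v * e b * M v b) := by
    intro e he heS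
    by_contra hcon
    push Not at hcon
    have hfit : ∀ j ∈ S.erase v, B v j = e v * e j * M v j := by
      intro j hj
      by_cases h0 : B v j = 0
      · have : M v j = 0 := by_contra fun hM => (h.ne_zero_iff v j).2 hM h0
        simp [h0, this]
      · exact (h.fit_or he (Finset.ne_of_mem_erase hj).symm).resolve_right (hcon j hj h0)
    refine hS ⟨e, he, ?_⟩
    intro i hi j hj
    by_cases hiv : i = v
    · subst hiv
      by_cases hji : j = i
      · subst hji
        rcases he j with h1 | h1 <;> simp [h1, h.diagB, h.diagM]
      · exact hfit j (Finset.mem_erase.2 ⟨hji, hj⟩)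
    · by_cases hjv : j = v
      · subst hjv
        rw [h.symmB, h.symmM, hfit i (Finset.mem_erase.2 ⟨hiv, hi⟩)]
        ring
      · exact heS i (Finset.mem_erase.2 ⟨hiv, hi⟩) j (Finset.mem_erase.2 ⟨hjv, hj⟩)
  obtain ⟨e, he, hev, hei⟩ := flip_signs hd v
  have heS : ∀ i ∈ S.erase v, ∀ j ∈ S.erase v, B i j = e i * e j * M i j := by
    intro i hi j hj
    rw [hei i (Finset.ne_of_mem_erase hi), hei j (Finset.ne_of_mem_erase hj)]
    exact hdS i hi j hj
  have hed : ∀ j ∈ S.erase v, e v * e j * M v j = -(d v * d j * M v j) := by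
    intro j hj
    rw [hev, hei j (Finset.ne_of_mem_erase hj)]; ring
  obtain ⟨b, hb, hb0, hvb⟩ := hbad d hd hdS
  obtain ⟨a, ha, ha0, hva⟩ := hbad e he heS
  have hva' : B v a = d v * d a * M v a := by rw [hva, hed a ha, neg_neg]
  refine ⟨d, hd, hdS, a, ha, b, hb, ?_, ha0, hb0, hva', hvb, ?_⟩
  · rintro rfl
    omega
  · intro u hu hua hub
    by_contra hu0
    rcases h.fit_or hd (Finset.ne_of_mem_erase hu).symm with hfit | hfit
    · exact hua (fit_unique h hS hmin hv hd hdS hu ha hb hu0 ha0 hb0 hfit hva' hvb)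
    · refine hub (fit_unique h hS hmin hv he heS hu hb ha hu0 hb0 ha0 ?_ ?_ hva)
      · rw [hed u hu, hfit]
      · rw [hed b hb, hvb]

/-! ### Positivity -/

/-- A minimal unbalanced set is incompatible with positivity of `M` as soon as it contains
exactly one edge `p q` where `B` is positive. -/
lemma false_of_cycle [Fintype V] (h : Companions B M) (hpos : PosDefInt M) {S : Finset V}
    (hS : ¬ SignBalanced B M S) (hmin : ∀ T, T ⊂ S → SignBalanced B M T) {p q : V} (hp : p ∈ S)
    (hq : q ∈ S) (hpq : p ≠ q) (hB : B p q = 1)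
    (huniq : ∀ i ∈ S, ∀ j ∈ S, i ≠ j → B i j = 1 → (i = p ∧ j = q) ∨ (i = q ∧ j = p)) :
    False := by
  -- Signs for `S \ p` that do not fit at `p q` but fit at the other edge at `p`.
  obtain ⟨d, hd, hdS, hdq, hdp⟩ : ∃ d : V → ℤ, (∀ i, d i = 1 ∨ d i = -1) ∧
      (∀ i ∈ S.erase p, ∀ j ∈ S.erase p, B i j = d i * d j * M i j) ∧
      B p q = -(d p * d q * M p q) ∧
      ∀ j ∈ S.erase p, j ≠ q → B p j = d p * d j * M p j := by
    obtain ⟨d, hd, hdS, a, ha, b, hb, hab, ha0, hb0, hpa, hpb, hrest⟩ :=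
      minimal_nbrs h hS hmin hp
    have hrest' : ∀ e : V → ℤ, ∀ u ∈ S.erase p, u ≠ a → u ≠ b → B p u = e p * e u * M p u := by
      intro e u hu hua hub
      have h0 := hrest u hu hua hub
      have : M p u = 0 := by_contra fun hM => (h.ne_zero_iff p u).2 hM h0
      simp [h0, this]
    have hqE : q ∈ S.erase p := Finset.mem_erase.2 ⟨hpq.symm, hq⟩
    have hqab : q = a ∨ q = b := by
      by_contra hcon
      push Not at hcon
      have := hrest q hqE hcon.1 hcon.2
      omega
    rcases hqab with rfl | rfl
    · obtain ⟨e, he, hep, hei⟩ := flip_signs hd p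
      refine ⟨e, he, ?_, ?_, ?_⟩
      · intro i hi j hj
        rw [hei i (Finset.ne_of_mem_erase hi), hei j (Finset.ne_of_mem_erase hj)]
        exact hdS i hi j hj
      · rw [hpa, hep, hei q hpq.symm]; ring
      · intro j hj hjq
        by_cases hjb : j = b
        · subst hjb
          rw [hpb, hep, hei j (Finset.ne_of_mem_erase hj)]; ring
        · exact hrest' e j hj hjq hjb
    · refine ⟨d, hd, hdS, hpb, ?_⟩
      intro j hj hjq
      by_cases hja : j = a
      · subst hja; exact hpa
      · exact hrest' d j hj hja hjq
  have hneg : ∀ i ∈ S, ∀ j ∈ S, i ≠ j → B i j ≠ 0 → d i * d j * M i j = -1 := by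
    -- The case where the edge is not `p q`, in either order.
    have hB' : ∀ i ∈ S, ∀ j ∈ S, i ≠ j → B i j ≠ 0 → ¬ (i = p ∧ j = q) → ¬ (i = q ∧ j = p) →
        B i j = -1 := by
      intro i hi j hj hij h0 h1 h2
      rcases h.off i j hij with ⟨h3, _⟩ | ⟨h3 | h3, _⟩
      · exact absurd h3 h0
      · rcases huniq i hi j hj hij h3 with h4 | h4
        · exact absurd h4 h1
        · exact absurd h4 h2
      · exact h3
    have hpj : ∀ j ∈ S, p ≠ j → B p j ≠ 0 → d p * d j * M p j = -1 := by
      intro j hj hpj h0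
      by_cases hjq : j = q
      · subst hjq; omega
      · rw [← hdp j (Finset.mem_erase.2 ⟨hpj.symm, hj⟩) hjq]
        exact hB' p hp j hj hpj h0 (fun h' => hjq h'.2) (fun h' => hpq h'.1)
    intro i hi j hj hij h0
    by_cases hip : i = p
    · subst hip; exact hpj j hj hij h0
    by_cases hjp : j = p
    · subst hjp
      rw [h.symmM, mul_comm (d i)]
      exact hpj i hi (Ne.symm hij) (by rwa [h.symmB])
    · rw [← hdS i (Finset.mem_erase.2 ⟨hip, hi⟩) j (Finset.mem_erase.2 ⟨hjp, hj⟩)]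
      exact hB' i hi j hj hij h0 (fun h' => hip h'.1) (fun h' => hjp h'.2)
  have hrow : ∀ i ∈ S, ∑ j ∈ S, d i * d j * M i j = 0 := by
    intro i hi
    obtain ⟨-, -, -, a, ha, b, hb, hab, ha0, hb0, -, -, hrest⟩ := minimal_nbrs h hS hmin hi
    simp only [Finset.mem_erase] at ha hb hrest
    have hsub : ({i, a, b} : Finset V) ⊆ S := by
      intro x hx
      simp only [Finset.mem_insert, Finset.mem_singleton] at hx
      rcases hx with rfl | rfl | rfl
      exacts [hi, ha.2, hb.2]
    rw [← Finset.sum_subset hsub]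
    · rw [Finset.sum_insert (by simp [ha.1.symm, hb.1.symm]), Finset.sum_pair hab,
        hneg i hi a ha.2 ha.1.symm ha0, hneg i hi b hb.2 hb.1.symm hb0, h.diagM]
      rcases hd i with h1 | h1 <;> simp [h1]
    · intro x hx hx'
      simp only [Finset.mem_insert, Finset.mem_singleton, not_or] at hx'
      have h0 := hrest x ⟨hx'.1, hx⟩ hx'.2.1 hx'.2.2
      have : M i x = 0 := by_contra fun hM => (h.ne_zero_iff i x).2 hM h0
      simp [this]
  have hx : (fun i => if i ∈ S then d i else 0) ≠ (0 : V → ℤ) := by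
    intro h0
    have := congrFun h0 p
    rcases hd p with h1 | h1 <;> simp [hp, h1] at this
  have key := hpos _ hx
  have hz : ∑ i, ∑ j, M i j * (if i ∈ S then d i else 0) * (if j ∈ S then d j else 0) = 0 := by
    refine Finset.sum_eq_zero fun i _ => ?_
    by_cases hi : i ∈ S
    · refine Eq.trans ?_ (hrow i hi)
      simp only [hi, if_true, mul_ite, mul_zero, Finset.sum_ite_mem, Finset.univ_inter]
      exact Finset.sum_congr rfl fun j _ => by ring
    · simp [hi]
  exact absurd hz key.ne'

lemma posDefInt_of_balanced [Fintype V] (hpos : PosDefInt M)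
    (hb : SignBalanced B M Finset.univ) : PosDefInt B := by
  obtain ⟨d, hd, hdS⟩ := hb
  intro x hx
  have hne : (fun i => d i * x i) ≠ 0 := by
    intro h0
    apply hx
    funext i
    have := congrFun h0 i
    rcases hd i with h1 | h1 <;> simpa [h1] using this
  refine (hpos _ hne).trans_eq ?_
  refine Finset.sum_congr rfl fun i _ => Finset.sum_congr rfl fun j _ => ?_
  rw [hdS i (Finset.mem_univ _) j (Finset.mem_univ _)]
  ring

end Signs

/-! ### Quivers -/

/-- A minimal unbalanced set carries a chordless cycle of any quiver whose underlying graph is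
the graph of nonzero off-diagonal entries. -/
lemma isChordlessCycle {V A : Type*} [Fintype A] [DecidableEq V] {B M : Matrix V V ℤ}
    (h : Companions B M) {s t : A → V} (hnoloop : ∀ a : A, s a ≠ t a)
    (hsimple : ∀ a b : A, ((s a = s b ∧ t a = t b) ∨ (s a = t b ∧ t a = s b)) → a = b)
    (hadj : ∀ i j, i ≠ j →
      (B i j ≠ 0 ↔ ∃ a : A, (s a = i ∧ t a = j) ∨ (s a = j ∧ t a = i)))
    {S : Finset V} (hS : ¬ SignBalanced B M S) (hmin : ∀ T, T ⊂ S → SignBalanced B M T) :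
    IsChordlessCycle s t S := by
  classical
  refine ⟨?_, ?_, ?_⟩
  · rw [Finset.nonempty_iff_ne_empty]
    rintro rfl
    exact hS ⟨fun _ => 1, by simp, by simp⟩
  · intro u hu w hw
    by_contra hcon
    -- The set of vertices reachable from `u` and its complement are balanced and glue.
    let T := S.filter fun x => Relation.ReflTransGen (adjOn s t S) u x
    have hwT : w ∉ T := by simp [T, hcon]
    have huT : u ∈ T := by simp [T, hu, Relation.ReflTransGen.refl]
    have hTS : T ⊆ S := Finset.filter_subset _ _
    have h1 : SignBalanced B M T :=
      hmin T (Finset.ssubset_iff_subset_ne.2 ⟨hTS, fun he => hwT (he ▸ hw)⟩)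
    have h2 : SignBalanced B M (S \ T) := by
      refine hmin _ (Finset.ssubset_iff_subset_ne.2 ⟨Finset.sdiff_subset, ?_⟩)
      intro he
      rw [← he] at hu
      simp [huT] at hu
    have h3 := SignBalanced.glue h u h1 h2
      (fun i hi hi' => absurd hi (Finset.mem_sdiff.1 hi').2) (by
      intro i hi _ j hj hj'
      by_contra h0
      have hij : i ≠ j := by rintro rfl; exact hj' hi
      obtain ⟨a, ha⟩ := (hadj i j hij).1 h0
      apply hj'
      have hjS := (Finset.mem_sdiff.1 hj).1
      simp only [T, Finset.mem_filter] at hi ⊢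
      refine ⟨hjS, hi.2.tail ⟨a, ?_, ha⟩⟩
      simp only [fullArrows, Finset.mem_filter, Finset.mem_univ, true_and]
      rcases ha with ⟨h4, h5⟩ | ⟨h4, h5⟩ <;> rw [h4, h5]
      exacts [⟨hi.1, hjS⟩, ⟨hjS, hi.1⟩])
    rw [Finset.union_sdiff_of_subset hTS] at h3
    exact hS h3
  · intro v hv
    obtain ⟨-, -, -, a, ha, b, hb, hab, ha0, hb0, -, -, hrest⟩ := minimal_nbrs h hS hmin hv
    simp only [Finset.mem_erase] at ha hb hrest
    obtain ⟨α, hα⟩ := (hadj v a ha.1.symm).1 ha0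
    obtain ⟨β, hβ⟩ := (hadj v b hb.1.symm).1 hb0
    have hαβ : α ≠ β := by
      rintro rfl
      rcases hα with ⟨h1, h2⟩ | ⟨h1, h2⟩ <;> rcases hβ with ⟨h3, h4⟩ | ⟨h3, h4⟩
      · exact hab (h2.symm.trans h4)
      · exact hb.1 (h3.symm.trans h1)
      · exact ha.1 (h1.symm.trans h3)
      · exact hab (h1.symm.trans h3)
    have hset : ((fullArrows s t S).filter fun γ => s γ = v ∨ t γ = v) = {α, β} := by
      ext γ
      simp only [fullArrows, Finset.mem_filter, Finset.mem_univ, true_and, Finset.mem_insert,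
        Finset.mem_singleton]
      constructor
      · rintro ⟨⟨hs, ht⟩, hγ⟩
        obtain ⟨u, huS, huv, hγu⟩ : ∃ u ∈ S, u ≠ v ∧
            ((s γ = v ∧ t γ = u) ∨ (s γ = u ∧ t γ = v)) := by
          rcases hγ with h1 | h1
          · exact ⟨t γ, ht, fun h2 => hnoloop γ (h1.trans h2.symm), Or.inl ⟨h1, rfl⟩⟩
          · exact ⟨s γ, hs, fun h2 => hnoloop γ (h2.trans h1.symm), Or.inr ⟨rfl, h1⟩⟩
        have hu0 := (hadj v u huv.symm).2 ⟨γ, hγu⟩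
        have huab : u = a ∨ u = b := by
          by_contra hcon
          push Not at hcon
          exact hu0 (hrest u ⟨huv, huS⟩ hcon.1 hcon.2)
        rcases huab with rfl | rfl
        · left
          apply hsimple
          rcases hα with ⟨h1, h2⟩ | ⟨h1, h2⟩ <;> rcases hγu with ⟨h3, h4⟩ | ⟨h3, h4⟩ <;>
            simp [h1, h2, h3, h4]
        · right
          apply hsimple
          rcases hβ with ⟨h1, h2⟩ | ⟨h1, h2⟩ <;> rcases hγu with ⟨h3, h4⟩ | ⟨h3, h4⟩ <;>
            simp [h1, h2, h3, h4]
      · rintro (rfl | rfl)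
        · rcases hα with ⟨h1, h2⟩ | ⟨h1, h2⟩ <;> simp [h1, h2, ha.2, hv]
        · rcases hβ with ⟨h1, h2⟩ | ⟨h1, h2⟩ <;> simp [h1, h2, hb.2, hv]
    rw [hset, Finset.card_pair hαβ]

/-- let `Q` be a finite connected quiver on the vertices `Fin n`, without
loops, with at most one arrow between any two vertices (in either direction), in which
every chordless cycle is oriented, and admitting a positive definite quasi-Cartan
companion. Let `Δ` be an admissible cut and let `B` be the symmetric matrix with `2` on
the diagonal, entry `1` at pairs of distinct vertices joined by an arrow of `Δ`, entry
`-1` at pairs joined by an arrow not in `Δ`, and `0` at pairs not joined by an arrow.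
Then `B` is positive definite. -/
theorem stmt_6 {n : ℕ} {A : Type*} [Fintype A] [DecidableEq A]
    (s t : A → Fin n)
    (hnoloop : ∀ a : A, s a ≠ t a)
    (hsimple : ∀ a b : A,
      ((s a = s b ∧ t a = t b) ∨ (s a = t b ∧ t a = s b)) → a = b)
    (hconn : ∀ u v : Fin n,
      Relation.ReflTransGen
        (fun x y => ∃ a : A, (s a = x ∧ t a = y) ∨ (s a = y ∧ t a = x)) u v)
    (horiented : ∀ S : Finset (Fin n),
      IsChordlessCycle s t S → IsOrientedChordlessCycle s t S)
    (hQC : ∃ M : Matrix (Fin n) (Fin n) ℤ, IsQuasiCartanCompanion s t M ∧ PosDefInt M)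
    (Δ : Finset A) (hΔ : IsAdmissibleCut s t Δ)
    (B : Matrix (Fin n) (Fin n) ℤ)
    (hBsym : ∀ i j, B i j = B j i)
    (hBdiag : ∀ i, B i i = 2)
    (hBarrow : ∀ (i j : Fin n), i ≠ j → ∀ a : A,
      ((s a = i ∧ t a = j) ∨ (s a = j ∧ t a = i)) →
      B i j = if a ∈ Δ then 1 else -1)
    (hBzero : ∀ (i j : Fin n), i ≠ j →
      (¬ ∃ a : A, (s a = i ∧ t a = j) ∨ (s a = j ∧ t a = i)) → B i j = 0) :
    PosDefInt B := by
  obtain ⟨M, ⟨hMsym, hMdiag, hMoff⟩, hpos⟩ := hQC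
  have hadj : ∀ i j, i ≠ j →
      (B i j ≠ 0 ↔ ∃ a : A, (s a = i ∧ t a = j) ∨ (s a = j ∧ t a = i)) := by
    intro i j hij
    constructor
    · intro h0
      by_contra hcon
      exact h0 (hBzero i j hij hcon)
    · rintro ⟨a, ha⟩
      rw [hBarrow i j hij a ha]
      split_ifs <;> decide
  have h : Companions B M := by
    refine ⟨hBsym, hMsym, hBdiag, hMdiag, ?_⟩
    intro i j hij
    by_cases ha : ∃ a : A, (s a = i ∧ t a = j) ∨ (s a = j ∧ t a = i)
    · right
      refine ⟨?_, (hMoff i j hij).1 ha⟩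
      obtain ⟨a, ha⟩ := ha
      rw [hBarrow i j hij a ha]
      split_ifs <;> simp
    · exact Or.inl ⟨hBzero i j hij ha, (hMoff i j hij).2 ha⟩
  have hbal : ∀ S : Finset (Fin n), SignBalanced B M S := by
    intro S
    induction S using Finset.strongInduction with
    | H S hmin =>
      by_contra hS
      have hcyc := horiented S (isChordlessCycle h hnoloop hsimple hadj hS hmin)
      obtain ⟨e, he⟩ := Finset.card_eq_one.1 (hΔ S hcyc)
      have hmem : ∀ a, ((s a ∈ S ∧ t a ∈ S) ∧ a ∈ Δ) ↔ a = e := by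
        intro a
        have := Finset.ext_iff.1 he a
        simpa [fullArrows] using this
      obtain ⟨⟨hes, het⟩, heΔ⟩ := (hmem e).2 rfl
      refine false_of_cycle h hpos hS hmin hes het (hnoloop e) ?_ ?_
      · rw [hBarrow _ _ (hnoloop e) e (Or.inl ⟨rfl, rfl⟩), if_pos heΔ]
      · intro i hi j hj hij hB1
        obtain ⟨a, ha⟩ := (hadj i j hij).1 (by omega)
        have haΔ : a ∈ Δ := by
          by_contra hcon
          rw [hBarrow i j hij a ha, if_neg hcon] at hB1
          omega
        have hae : a = e := by
          refine (hmem a).1 ⟨?_, haΔ⟩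
          rcases ha with ⟨h4, h5⟩ | ⟨h4, h5⟩ <;> rw [h4, h5]
          exacts [⟨hi, hj⟩, ⟨hj, hi⟩]
        subst hae
        rcases ha with ⟨h4, h5⟩ | ⟨h4, h5⟩
        · exact Or.inl ⟨h4.symm, h5.symm⟩
        · exact Or.inr ⟨h5.symm, h4.symm⟩
  exact posDefInt_of_balanced hpos (hbal Finset.univ)
end

section
/- Let Q be a finite connected quiver without loops, with at most one arrow between any two vertices (in either direction), in which every chordless cycle is oriented, and which admits a positive definite quasi-Cartan companion. Then Q admits an admissible cut, i.e. there exists a set Δ of arrows of Q containing exactly one arrow of each oriented chordless cycle of Q. -/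
/-! ### Arrows and connectivity -/

/-- There is an arrow from `x` to `y`. -/
def HasArrow {V A : Type*} (s t : A → V) (x y : V) : Prop := ∃ a : A, s a = x ∧ t a = y

/-- There is an arrow between `x` and `y`, in one of the two directions. -/
def Linked {V A : Type*} (s t : A → V) (x y : V) : Prop := HasArrow s t x y ∨ HasArrow s t y x

theorem Linked.symm {V A : Type*} {s t : A → V} {x y : V} (h : Linked s t x y) :
    Linked s t y x := Or.symm h

theorem not_linked_self {V A : Type*} {s t : A → V} (hnoloop : ∀ a : A, s a ≠ t a)
    (x : V) : ¬ Linked s t x x := by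
  rintro (⟨a, h, h'⟩ | ⟨a, h, h'⟩) <;> exact hnoloop a (h.trans h'.symm)

section Cycles

variable {V A : Type*} [DecidableEq V] [Fintype A] {s t : A → V}

theorem mem_fullArrows {S : Finset V} {a : A} :
    a ∈ fullArrows s t S ↔ s a ∈ S ∧ t a ∈ S := by
  simp [fullArrows]

theorem adjOn_iff {S : Finset V} {x y : V} :
    adjOn s t S x y ↔ x ∈ S ∧ y ∈ S ∧ Linked s t x y := by
  constructor
  · rintro ⟨a, ha, ⟨rfl, rfl⟩ | ⟨rfl, rfl⟩⟩ <;> rw [mem_fullArrows] at ha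
    · exact ⟨ha.1, ha.2, Or.inl ⟨a, rfl, rfl⟩⟩
    · exact ⟨ha.2, ha.1, Or.inr ⟨a, rfl, rfl⟩⟩
  · rintro ⟨hx, hy, ⟨a, rfl, rfl⟩ | ⟨a, rfl, rfl⟩⟩
    · exact ⟨a, mem_fullArrows.2 ⟨hx, hy⟩, Or.inl ⟨rfl, rfl⟩⟩
    · exact ⟨a, mem_fullArrows.2 ⟨hy, hx⟩, Or.inr ⟨rfl, rfl⟩⟩

theorem reach_symm {S : Finset V} {x y : V} (h : Relation.ReflTransGen (adjOn s t S) x y) :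
    Relation.ReflTransGen (adjOn s t S) y x := by
  induction h with
  | refl => exact .refl
  | tail _ h ih =>
    rw [adjOn_iff] at h
    exact .head (adjOn_iff.2 ⟨h.2.1, h.1, h.2.2.symm⟩) ih

theorem reach_mono {S T : Finset V} (hST : S ⊆ T) {x y : V}
    (h : Relation.ReflTransGen (adjOn s t S) x y) :
    Relation.ReflTransGen (adjOn s t T) x y := by
  refine Relation.ReflTransGen.mono (fun a b hab => ?_) _ _ h
  rw [adjOn_iff] at hab ⊢
  exact ⟨hST hab.1, hST hab.2.1, hab.2.2⟩

/-- A set containing `x` and closed under adjacency inside `S` contains everything reachable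
from `x` inside `S`. -/
theorem reach_closed {S : Finset V} {P : V → Prop} {x y : V}
    (h : Relation.ReflTransGen (adjOn s t S) x y) (hx : P x)
    (hP : ∀ u ∈ S, ∀ v ∈ S, Linked s t u v → P u → P v) : P y := by
  induction h with
  | refl => exact hx
  | tail _ h ih =>
    rw [adjOn_iff] at h
    exact hP _ h.1 _ h.2.1 h.2.2 ih

/-! ### Local structure of chordless cycles -/

theorem IsChordlessCycle.exists_nbrs
    (hnoloop : ∀ a : A, s a ≠ t a)
    (hsimple : ∀ a b : A, ((s a = s b ∧ t a = t b) ∨ (s a = t b ∧ t a = s b)) → a = b)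
    {C : Finset V} (hC : IsChordlessCycle s t C) {c : V} (hc : c ∈ C) :
    ∃ c₁ ∈ C, ∃ c₂ ∈ C, c₁ ≠ c₂ ∧ Linked s t c c₁ ∧ Linked s t c c₂ ∧
      ∀ d ∈ C, Linked s t c d → d = c₁ ∨ d = c₂ := by
  classical
  obtain ⟨a, b, hab, he⟩ := Finset.card_eq_two.1 (hC.2.2 c hc)
  have key : ∀ x, x ∈ ({a, b} : Finset A) →
      ∃ d ∈ C, (s x = c ∧ t x = d) ∨ (s x = d ∧ t x = c) := by
    intro x ha
    rw [← he, Finset.mem_filter, mem_fullArrows] at ha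
    rcases ha with ⟨⟨h1, h2⟩, rfl | rfl⟩
    · exact ⟨_, h2, Or.inl ⟨rfl, rfl⟩⟩
    · exact ⟨_, h1, Or.inr ⟨rfl, rfl⟩⟩
  obtain ⟨c₁, h1, e1⟩ := key a (by simp)
  obtain ⟨c₂, h2, e2⟩ := key b (by simp)
  refine ⟨c₁, h1, c₂, h2, ?_, ?_, ?_, ?_⟩
  · rintro rfl
    exact hab (hsimple a b (by grind))
  · rcases e1 with e | e
    exacts [Or.inl ⟨a, e⟩, Or.inr ⟨a, e⟩]
  · rcases e2 with e | e
    exacts [Or.inl ⟨b, e⟩, Or.inr ⟨b, e⟩]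
  · intro d hd hj
    have : ∃ x, (s x = c ∧ t x = d) ∨ (s x = d ∧ t x = c) := by
      rcases hj with ⟨x, hx⟩ | ⟨x, hx⟩
      exacts [⟨x, Or.inl hx⟩, ⟨x, Or.inr hx⟩]
    obtain ⟨x, hx⟩ := this
    have hm : x ∈ ({a, b} : Finset A) := by
      rw [← he, Finset.mem_filter, mem_fullArrows]
      grind
    have := hnoloop x
    simp only [Finset.mem_insert, Finset.mem_singleton] at hm
    grind

/-- The valency condition of a chordless cycle, read off from the neighbours. -/
theorem card_incident_eq_two
    (hnoloop : ∀ a : A, s a ≠ t a)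
    (hsimple : ∀ a b : A, ((s a = s b ∧ t a = t b) ∨ (s a = t b ∧ t a = s b)) → a = b)
    {S : Finset V} {x y z : V} (hx : x ∈ S) (hy : y ∈ S) (hz : z ∈ S) (hyz : y ≠ z)
    (hxy : Linked s t x y) (hxz : Linked s t x z)
    (h : ∀ d ∈ S, Linked s t x d → d = y ∨ d = z) :
    ((fullArrows s t S).filter fun a => s a = x ∨ t a = x).card = 2 := by
  classical
  have arrow : ∀ {d}, Linked s t x d → ∃ a, (s a = x ∧ t a = d) ∨ (s a = d ∧ t a = x) := by
    rintro d (⟨a, ha⟩ | ⟨a, ha⟩)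
    exacts [⟨a, Or.inl ha⟩, ⟨a, Or.inr ha⟩]
  obtain ⟨a, ha⟩ := arrow hxy
  obtain ⟨b, hb⟩ := arrow hxz
  have hla := hnoloop a
  have hlb := hnoloop b
  refine Finset.card_eq_two.2 ⟨a, b, by grind, ?_⟩
  ext e
  rw [Finset.mem_filter, mem_fullArrows, Finset.mem_insert, Finset.mem_singleton]
  constructor
  · rintro ⟨⟨h1, h2⟩, rfl | rfl⟩
    · rcases h _ h2 (Or.inl ⟨e, rfl, rfl⟩) with h3 | h3
      · exact Or.inl (hsimple _ _ (by grind))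
      · exact Or.inr (hsimple _ _ (by grind))
    · rcases h _ h1 (Or.inr ⟨e, rfl, rfl⟩) with h3 | h3
      · exact Or.inl (hsimple _ _ (by grind))
      · exact Or.inr (hsimple _ _ (by grind))
  · grind

/-- At a vertex `v` of an oriented chordless cycle, one of the two neighbours is a successor
and the other one is a predecessor. -/
theorem IsOrientedChordlessCycle.out_iff
    {C : Finset V} (hC : IsOrientedChordlessCycle s t C) {v u w : V} (hv : v ∈ C) (hu : u ∈ C)
    (hw : w ∈ C) (huw : u ≠ w) (hvu : Linked s t v u) (hvw : Linked s t v w) :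
    HasArrow s t v u ↔ ¬ HasArrow s t v w := by
  obtain ⟨h1, h2⟩ := hC.2 v hv
  rw [Finset.card_eq_one] at h1 h2
  obtain ⟨a, ha⟩ := h1
  obtain ⟨b, hb⟩ := h2
  have mem1 : ∀ e, s e = v → t e ∈ C → e = a := by
    intro e h h'
    rw [← Finset.mem_singleton, ← ha, Finset.mem_filter, mem_fullArrows]
    exact ⟨⟨h ▸ hv, h'⟩, h⟩
  have mem2 : ∀ e, t e = v → s e ∈ C → e = b := by
    intro e h h'
    rw [← Finset.mem_singleton, ← hb, Finset.mem_filter, mem_fullArrows]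
    exact ⟨⟨h', h ▸ hv⟩, h⟩
  constructor
  · rintro ⟨e, he, rfl⟩ ⟨f, hf, rfl⟩
    exact huw (by rw [mem1 e he hu, mem1 f hf hw])
  · intro h
    rcases hvu with h' | ⟨e, rfl, he⟩
    · exact h'
    · rcases hvw with h' | ⟨f, rfl, hf⟩
      · exact absurd h' h
      · exact absurd (by rw [mem2 e he hu, mem2 f hf hw]) huw

/-- Deleting two consecutive vertices from a directed cycle leaves a connected set. The cycle is
given by a relation `D` which restricts to the graph of a permutation of `C`; the set of vertices
that cannot reach the predecessor `c₂` of `c` is stable under this permutation, hence closed under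
adjacency in `C`; as it does not contain `c`, it is empty. -/
theorem reach_of_perm {C : Finset V} {D : V → V → Prop}
    (hD : ∀ x ∈ C, ∀ y ∈ C, D x y → Linked s t x y)
    (hD' : ∀ x ∈ C, ∀ y ∈ C, Linked s t x y → D x y ∨ D y x)
    (hex : ∀ x ∈ C, ∃ y ∈ C, D x y)
    (hin : ∀ x ∈ C, ∀ y ∈ C, ∀ z ∈ C, D y x → D z x → y = z)
    (hconn : ∀ u ∈ C, ∀ v ∈ C, Relation.ReflTransGen (adjOn s t C) u v)
    {c c₁ c₂ : V} (hc : c ∈ C) (h₁ : c₁ ∈ C) (h₂ : c₂ ∈ C) (hc₁ : D c c₁) (hc₂ : D c₂ c)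
    {x : V} (hx : x ∈ C \ {c, c₁}) :
    Relation.ReflTransGen (adjOn s t (C \ {c, c₁})) x c₂ := by
  classical
  by_contra hxr
  let R := (C \ {c, c₁}).filter fun x => ¬ Relation.ReflTransGen (adjOn s t (C \ {c, c₁})) x c₂
  have hRC : ∀ {x}, x ∈ R → x ∈ C := by
    intro x hx
    simp only [R, Finset.mem_filter, Finset.mem_sdiff] at hx
    exact hx.1.1
  have hR : ∀ x ∈ R, ∀ y ∈ C, D x y → y ∈ R := by
    intro x hx y hy hxy
    have hxC := hRC hx
    simp only [R, Finset.mem_filter, Finset.mem_sdiff, Finset.mem_insert,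
      Finset.mem_singleton, not_or] at hx ⊢
    have hyc : y ≠ c := by
      rintro rfl
      obtain rfl := hin _ hc _ hxC _ h₂ hxy hc₂
      exact hx.2 .refl
    have hyc₁ : y ≠ c₁ := by
      rintro rfl
      exact hx.1.2.1 (hin _ h₁ _ hxC _ hc hxy hc₁)
    refine ⟨⟨hy, hyc, hyc₁⟩, fun h => hx.2 (.head ?_ h)⟩
    rw [adjOn_iff]
    simp [hx.1, hy, hyc, hyc₁, hD x hxC y hy hxy]
  choose! g hgC hgD using hex
  have himg : R.image g = R := by
    refine Finset.eq_of_subset_of_card_le ?_ ?_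
    · intro y hy
      obtain ⟨x, hx, rfl⟩ := Finset.mem_image.1 hy
      exact hR x hx _ (hgC x (hRC hx)) (hgD x (hRC hx))
    · rw [Finset.card_image_of_injOn]
      intro x hx y hy hxy
      refine hin (g x) (hgC x (hRC hx)) x (hRC hx) y (hRC hy) (hgD x (hRC hx)) ?_
      have := hgD y (hRC hy)
      rwa [← show g x = g y from hxy] at this
  have hcR : c ∈ R := by
    have hxR : x ∈ R := Finset.mem_filter.2 ⟨hx, hxr⟩
    refine reach_closed (P := (· ∈ R)) (hconn x (hRC hxR) c hc) hxR ?_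
    intro u hu v hv huv huR
    rcases hD' u hu v hv huv with h | h
    · exact hR u huR v hv h
    · obtain ⟨z, hz, rfl⟩ := Finset.mem_image.1 (himg.symm ▸ huR)
      rwa [hin _ hu v hv z (hRC hz) h (hgD z (hRC hz))]
  simp [R] at hcR

/-- Deleting two adjacent vertices `c`, `c₁` from an oriented chordless cycle leaves a connected
set, namely a path ending in the other neighbour `c₂` of `c`. -/
theorem IsOrientedChordlessCycle.reach_sdiff_pair
    (hsimple : ∀ a b : A, ((s a = s b ∧ t a = t b) ∨ (s a = t b ∧ t a = s b)) → a = b)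
    {C : Finset V} (hC : IsOrientedChordlessCycle s t C) {c c₁ c₂ : V}
    (hc : c ∈ C) (h₁ : c₁ ∈ C) (h₂ : c₂ ∈ C) (h₁₂ : c₁ ≠ c₂)
    (hc₁ : Linked s t c c₁) (hc₂ : Linked s t c c₂) {x : V} (hx : x ∈ C \ {c, c₁}) :
    Relation.ReflTransGen (adjOn s t (C \ {c, c₁})) x c₂ := by
  have hout : ∀ x ∈ C, ∃ y ∈ C, HasArrow s t x y := by
    intro x hx
    obtain ⟨a, ha⟩ := Finset.card_eq_one.1 (hC.2 x hx).1
    have : a ∈ ({a} : Finset A) := by simp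
    rw [← ha, Finset.mem_filter, mem_fullArrows] at this
    exact ⟨t a, this.1.2, a, this.2, rfl⟩
  have hin : ∀ x ∈ C, ∃ y ∈ C, HasArrow s t y x := by
    intro x hx
    obtain ⟨a, ha⟩ := Finset.card_eq_one.1 (hC.2 x hx).2
    have : a ∈ ({a} : Finset A) := by simp
    rw [← ha, Finset.mem_filter, mem_fullArrows] at this
    exact ⟨s a, this.1.1, a, rfl, this.2⟩
  have hout' : ∀ x ∈ C, ∀ y ∈ C, ∀ z ∈ C, HasArrow s t x y → HasArrow s t x z → y = z := by
    intro x hx y hy z hz h h'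
    by_contra hne
    exact (hC.out_iff hx hy hz hne (Or.inl h) (Or.inl h')).1 h h'
  have hin' : ∀ x ∈ C, ∀ y ∈ C, ∀ z ∈ C, HasArrow s t y x → HasArrow s t z x → y = z := by
    intro x hx y hy z hz h h'
    obtain ⟨a, ha⟩ := Finset.card_eq_one.1 (hC.2 x hx).2
    have key : ∀ e, t e = x → s e ∈ C → e = a := by
      intro e h h'
      rw [← Finset.mem_singleton, ← ha, Finset.mem_filter, mem_fullArrows]
      exact ⟨⟨h', h ▸ hx⟩, h⟩
    obtain ⟨e, rfl, he⟩ := h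
    obtain ⟨f, rfl, hf⟩ := h'
    rw [key e he hy, key f hf hz]
  have hopp := hC.out_iff hc h₁ h₂ h₁₂ hc₁ hc₂
  rcases hc₁ with h | h
  · have h' : HasArrow s t c₂ c := by
      rcases hc₂ with h' | h'
      · exact absurd h' (hopp.1 h)
      · exact h'
    exact reach_of_perm (D := HasArrow s t) (fun _ _ _ _ h => Or.inl h)
      (fun _ _ _ _ h => h) hout hin' hC.1.2.1 hc h₁ h₂ h h' hx
  · have hout₂ : HasArrow s t c c₂ := by
      by_contra hout₂
      obtain ⟨a, rfl, rfl⟩ := hopp.2 hout₂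
      obtain ⟨b, hb, hb'⟩ := h
      obtain rfl := hsimple a b (Or.inr ⟨hb'.symm, hb.symm⟩)
      exact h₁₂ (hin' _ hc _ h₁ _ h₂ ⟨a, hb, hb'⟩ (hc₂.resolve_left hout₂))
    exact reach_of_perm (D := fun x y => HasArrow s t y x) (fun _ _ _ _ h => Or.inr h)
      (fun _ _ _ _ h => h.symm) hin hout' hC.1.2.1 hc h₁ h₂ h hout₂ hx

/-! ### Chordless cycles from induced paths -/

/-- If `w` is reachable from `u` inside `T`, a shortest chain from `u` to `w` inside `T` is an
injective sequence in which only consecutive members are linked. -/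
theorem exists_induced_path {T : Finset V} {u w : V} (hu : u ∈ T)
    (h : Relation.ReflTransGen (adjOn s t T) u w) :
    ∃ (n : ℕ) (f : ℕ → V), f 0 = u ∧ f n = w ∧ (∀ i ≤ n, f i ∈ T) ∧
      (∀ i < n, Linked s t (f i) (f (i + 1))) ∧
      (∀ i j, i < j → j ≤ n → f i ≠ f j) ∧
      (∀ i j, i < j → j ≤ n → Linked s t (f i) (f j) → j = i + 1) := by
  classical
  let P : ℕ → Prop := fun n => ∃ f : ℕ → V, f 0 = u ∧ f n = w ∧ (∀ i ≤ n, f i ∈ T) ∧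
      (∀ i < n, Linked s t (f i) (f (i + 1)))
  have hP : ∃ n, P n := by
    simp only [P]
    clear P
    induction h with
    | refl => exact ⟨0, fun _ => u, rfl, rfl, fun _ _ => hu, by simp⟩
    | @tail b c _ hbc ih =>
      obtain ⟨n, f, h0, hn, hT, hl⟩ := ih
      rw [adjOn_iff] at hbc
      refine ⟨n + 1, fun i => if i ≤ n then f i else c, by simp [h0], by simp, ?_, ?_⟩
      · intro i hi
        dsimp only
        split_ifs with h
        · exact hT i h
        · exact hbc.2.1
      · intro i hi
        rcases Nat.lt_succ_iff_lt_or_eq.1 hi with h | rfl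
        · have h1 : i ≤ n := h.le
          have h2 : i + 1 ≤ n := h
          simpa [h1, h2] using hl i h
        · simpa [hn] using hbc.2.2
  obtain ⟨f, h0, hn, hT, hl⟩ := Nat.find_spec hP
  have hmin : ∀ m, P m → Nat.find hP ≤ m := fun m hm => Nat.find_min' hP hm
  generalize Nat.find hP = n at hn hT hl hmin
  refine ⟨n, f, h0, hn, hT, hl, ?_, ?_⟩
  · intro i j hij hj hf
    have : P (n - (j - i)) := by
      refine ⟨fun k => if k ≤ i then f k else f (k + (j - i)), by simp [h0], ?_, ?_, ?_⟩
      · dsimp only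
        split_ifs with h
        · have : j = n := by omega
          have h2 : n - (j - i) = i := by omega
          rw [h2, hf, this, hn]
        · rw [← hn]
          congr 1
          omega
      · intro k hk
        dsimp only
        split_ifs with h
        · exact hT _ (by omega)
        · exact hT _ (by omega)
      · intro k hk
        dsimp only
        split_ifs with h h' h'
        · exact hl _ (by omega)
        · have h2 : k = i := by omega
          rw [h2, hf, show i + 1 + (j - i) = j + 1 by omega]
          exact hl _ (by omega)
        · omega
        · rw [show k + 1 + (j - i) = k + (j - i) + 1 by omega]
          exact hl _ (by omega)
    have := hmin _ this
    omega
  · intro i j hij hj hf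
    by_contra hne
    have : P (n - (j - i - 1)) := by
      refine ⟨fun k => if k ≤ i then f k else f (k + (j - i - 1)), by simp [h0], ?_, ?_, ?_⟩
      · dsimp only
        rw [if_neg (by omega), ← hn]
        congr 1
        omega
      · intro k hk
        dsimp only
        split_ifs with h
        · exact hT _ (by omega)
        · exact hT _ (by omega)
      · intro k hk
        dsimp only
        split_ifs with h h' h'
        · exact hl _ (by omega)
        · have h2 : k = i := by omega
          rw [h2, show i + 1 + (j - i - 1) = j by omega]
          exact hf
        · omega
        · rw [show k + 1 + (j - i - 1) = k + (j - i - 1) + 1 by omega]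
          exact hl _ (by omega)
    have := hmin _ this
    omega

/-- If `u` and `w` are the only neighbours of `v` in a set `T` in which they are connected, then
`v` together with a shortest path from `u` to `w` in `T` is a chordless cycle; as this cycle is
oriented, exactly one of the arrows joining `v` to `u` and `w` starts at `v`. -/
theorem hasArrow_iff_of_hub
    (hnoloop : ∀ a : A, s a ≠ t a)
    (hsimple : ∀ a b : A, ((s a = s b ∧ t a = t b) ∨ (s a = t b ∧ t a = s b)) → a = b)
    (horiented : ∀ S : Finset V, IsChordlessCycle s t S → IsOrientedChordlessCycle s t S)
    {T : Finset V} {v u w : V} (hv : v ∉ T) (hu : u ∈ T) (huw : u ≠ w)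
    (hvu : Linked s t v u) (hvw : Linked s t v w)
    (hN : ∀ d ∈ T, Linked s t v d → d = u ∨ d = w)
    (h : Relation.ReflTransGen (adjOn s t T) u w) :
    HasArrow s t v u ↔ ¬ HasArrow s t v w := by
  obtain ⟨n, f, h0, hn, hT, hl, hinj, hch⟩ := exists_induced_path hu h
  have hn1 : 1 ≤ n := by
    rcases Nat.eq_zero_or_pos n with rfl | h
    · exact absurd (h0.symm.trans hn) huw
    · exact h
  set C : Finset V := insert v ((Finset.range (n + 1)).image f) with hCdef
  have hmem : ∀ d, d ∈ C ↔ d = v ∨ ∃ i ≤ n, f i = d := by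
    intro d
    simp [C]
  have hvC : v ∈ C := (hmem v).2 (Or.inl rfl)
  have hfC : ∀ i ≤ n, f i ∈ C := fun i hi => (hmem _).2 (Or.inr ⟨i, hi, rfl⟩)
  have hfv : ∀ i ≤ n, f i ≠ v := fun i hi h => hv (h ▸ hT i hi)
  have hends : ∀ i ≤ n, Linked s t v (f i) → i = 0 ∨ i = n := by
    intro i hi hli
    by_contra hne
    push Not at hne
    rcases hN _ (hT i hi) hli with h | h
    · exact hinj 0 i (by omega) hi (h0.trans h.symm)
    · exact hinj i n (by omega) le_rfl (h.trans hn.symm)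
  have hcons : ∀ i ≤ n, ∀ j ≤ n, Linked s t (f i) (f j) → j = i + 1 ∨ i = j + 1 := by
    intro i hi j hj hij
    rcases lt_trichotomy i j with h | rfl | h
    · exact Or.inl (hch i j h hj hij)
    · exact absurd hij (not_linked_self hnoloop _)
    · exact Or.inr (hch j i h hi hij.symm)
  have hpos : ∀ i ≤ n, Relation.ReflTransGen (adjOn s t C) v (f i) := by
    intro i
    induction i with
    | zero =>
      intro _
      exact .single (adjOn_iff.2 ⟨hvC, hfC 0 (by omega), h0 ▸ hvu⟩)
    | succ i ih =>
      intro hi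
      exact (ih (by omega)).tail
        (adjOn_iff.2 ⟨hfC i (by omega), hfC _ hi, hl i (by omega)⟩)
  have hall : ∀ d ∈ C, Relation.ReflTransGen (adjOn s t C) v d := by
    intro d hd
    rcases (hmem d).1 hd with rfl | ⟨i, hi, rfl⟩
    · exact .refl
    · exact hpos i hi
  have hC : IsChordlessCycle s t C := by
    refine ⟨⟨v, hvC⟩, fun x hx y hy => (reach_symm (hall x hx)).trans (hall y hy), ?_⟩
    intro x hx
    rcases (hmem x).1 hx with rfl | ⟨i, hi, rfl⟩
    · refine card_incident_eq_two hnoloop hsimple hx (h0 ▸ hfC 0 (by omega))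
        (hn ▸ hfC n le_rfl) huw hvu hvw ?_
      intro d hd hxd
      rcases (hmem d).1 hd with rfl | ⟨i, hi, rfl⟩
      · exact absurd hxd (not_linked_self hnoloop _)
      · exact hN _ (hT i hi) hxd
    · rcases Nat.eq_zero_or_pos i with rfl | hi0
      · refine card_incident_eq_two hnoloop hsimple hx hvC (hfC 1 hn1) (hfv 1 hn1).symm
          (h0 ▸ hvu.symm) (hl 0 (by omega)) ?_
        intro d hd hxd
        rcases (hmem d).1 hd with rfl | ⟨j, hj, rfl⟩
        · exact Or.inl rfl
        · rcases hcons 0 hi j hj hxd with h | h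
          · exact Or.inr (by rw [h])
          · omega
      · obtain ⟨i, rfl⟩ : ∃ k, i = k + 1 := ⟨i - 1, by omega⟩
        rcases eq_or_lt_of_le hi with hin | hin
        · refine card_incident_eq_two hnoloop hsimple hx hvC (hfC i (by omega))
            (hfv i (by omega)).symm (by rw [hin, hn]; exact hvw.symm)
            (hl i (by omega)).symm ?_
          intro d hd hxd
          rcases (hmem d).1 hd with rfl | ⟨j, hj, rfl⟩
          · exact Or.inl rfl
          · rcases hcons _ hi j hj hxd with h | h
            · omega
            · exact Or.inr (by rw [show i = j by omega])
        · refine card_incident_eq_two hnoloop hsimple hx (hfC i (by omega))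
            (hfC (i + 2) (by omega)) (hinj _ _ (by omega) (by omega))
            (hl i (by omega)).symm (hl (i + 1) (by omega)) ?_
          intro d hd hxd
          rcases (hmem d).1 hd with rfl | ⟨j, hj, rfl⟩
          · rcases hends _ hi hxd.symm with h | h <;> omega
          · rcases hcons _ hi j hj hxd with h | h
            · exact Or.inr (by rw [h])
            · exact Or.inl (by rw [show i = j by omega])
  exact (horiented C hC).out_iff hvC (h0 ▸ hfC 0 (by omega)) (hn ▸ hfC n le_rfl) huw hvu hvw

/-- If a connected set `K` outside the chordless cycle `C` contains exactly one neighbour `k` of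
`y ∈ C`, then all neighbours of `K` in `C` lie on one edge of `C` at `y`. Otherwise `k` and the two
neighbours of `y` in `C` would be three neighbours of `y`, any two of which lie on a
common chordless cycle through `y`, so that any two have opposite directions at `y`. -/
theorem attach_of_unique
    (hnoloop : ∀ a : A, s a ≠ t a)
    (hsimple : ∀ a b : A, ((s a = s b ∧ t a = t b) ∨ (s a = t b ∧ t a = s b)) → a = b)
    (horiented : ∀ S : Finset V, IsChordlessCycle s t S → IsOrientedChordlessCycle s t S)
    {C K : Finset V} (hC : IsChordlessCycle s t C) (hCK : Disjoint C K)
    (hK : ∀ x ∈ K, ∀ y ∈ K, Relation.ReflTransGen (adjOn s t K) x y)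
    {y k : V} (hy : y ∈ C) (hk : k ∈ K) (hyk : Linked s t y k)
    (huniq : ∀ k' ∈ K, Linked s t y k' → k' = k) :
    ∃ y' ∈ C, Linked s t y y' ∧ ∀ c ∈ C, ∀ k ∈ K, Linked s t c k → c = y ∨ c = y' := by
  obtain ⟨c₁, h₁, c₂, h₂, h₁₂, hc₁, hc₂, hN⟩ := hC.exists_nbrs hnoloop hsimple hy
  have hO := horiented C hC
  have key : ∀ c₁ ∈ C, ∀ c₂ ∈ C, c₁ ≠ c₂ → Linked s t y c₁ → Linked s t y c₂ →
      (∀ d ∈ C, Linked s t y d → d = c₁ ∨ d = c₂) →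
      (∃ c ∈ C, ∃ k ∈ K, Linked s t c k ∧ c ≠ y ∧ c ≠ c₁) →
      (HasArrow s t y c₂ ↔ ¬ HasArrow s t y k) := by
    rintro c₁ h₁ c₂ h₂ h₁₂ hc₁ hc₂ hN ⟨c, hc, k', hk', hck, hcy, hcc⟩
    have hsub : C \ {y, c₁} ⊆ (C \ {y, c₁}) ∪ K := Finset.subset_union_left
    have hc₂y : c₂ ≠ y := by
      rintro rfl
      exact not_linked_self hnoloop _ hc₂
    have hc₂m : c₂ ∈ C \ {y, c₁} := by simp [h₂, hc₂y, h₁₂.symm]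
    have hcm : c ∈ C \ {y, c₁} := by simp [hc, hcy, hcc]
    refine hasArrow_iff_of_hub hnoloop hsimple horiented (T := (C \ {y, c₁}) ∪ K)
      ?_ (hsub hc₂m) ?_ hc₂ hyk ?_ ?_
    · simp [Finset.disjoint_left.1 hCK hy]
    · rintro rfl
      exact Finset.disjoint_left.1 hCK h₂ hk
    · intro d hd hyd
      rcases Finset.mem_union.1 hd with hd | hd
      · simp only [Finset.mem_sdiff, Finset.mem_insert, Finset.mem_singleton, not_or] at hd
        exact Or.inl ((hN d hd.1 hyd).resolve_left hd.2.2)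
      · exact Or.inr (huniq d hd hyd)
    · have r1 := reach_symm (hO.reach_sdiff_pair hsimple hy h₁ h₂ h₁₂ hc₁ hc₂ hcm)
      refine ((reach_mono hsub r1).tail (adjOn_iff.2
        ⟨hsub hcm, Finset.mem_union_right _ hk', hck⟩)).trans ?_
      exact reach_mono Finset.subset_union_right (hK k' hk' k hk)
  by_contra hcon
  push Not at hcon
  obtain ⟨a, ha, ka, hka, hl, hay, hac⟩ := hcon c₁ h₁ hc₁
  obtain ⟨b, hb, kb, hkb, hl', hby, hbc⟩ := hcon c₂ h₂ hc₂
  have e1 := key c₁ h₁ c₂ h₂ h₁₂ hc₁ hc₂ hN ⟨a, ha, ka, hka, hl, hay, hac⟩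
  have e2 := key c₂ h₂ c₁ h₁ h₁₂.symm hc₂ hc₁ (fun d hd h => (hN d hd h).symm)
    ⟨b, hb, kb, hkb, hl', hby, hbc⟩
  have e3 := hO.out_iff hy h₁ h₂ h₁₂ hc₁ hc₂
  tauto

/-! ### Separation by an edge -/

/-- Every chordless cycle `C` properly contained in `S` is separated, by one of its edges, from a
nonempty set `K` of vertices: the neighbours of `K` in `S` outside `K` are among the two ends
`y`, `y'` of an edge of `C`. The set `K` is a largest connected subset of `S \ C` whose neighbours in `C`
lie on an edge; by `attach_of_unique` it could be enlarged as long as it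
has a neighbour in `S \ C`. -/
theorem exists_separation
    (hnoloop : ∀ a : A, s a ≠ t a)
    (hsimple : ∀ a b : A, ((s a = s b ∧ t a = t b) ∨ (s a = t b ∧ t a = s b)) → a = b)
    (horiented : ∀ S : Finset V, IsChordlessCycle s t S → IsOrientedChordlessCycle s t S)
    {C S : Finset V} (hC : IsChordlessCycle s t C) (hCS : C ⊂ S) :
    ∃ K ⊆ S \ C, K.Nonempty ∧ ∃ y ∈ C, ∃ y' ∈ C, Linked s t y y' ∧
      ∀ d ∈ S, d ∉ K → ∀ k ∈ K, Linked s t d k → d = y ∨ d = y' := by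
  classical
  let P : Finset V → Prop := fun K =>
    (∀ x ∈ K, ∀ y ∈ K, Relation.ReflTransGen (adjOn s t K) x y) ∧
    ∃ y ∈ C, ∃ y' ∈ C, Linked s t y y' ∧
      ∀ c ∈ C, ∀ k ∈ K, Linked s t c k → c = y ∨ c = y'
  have grow : ∀ K, P K → ∀ k ∈ S \ C, K ⊆ S \ C → (∀ x ∈ K, ∃ z ∈ K, Linked s t z k) →
      P (insert k K) := by
    rintro K ⟨hK, y, hy, y', hy', hyy', hN⟩ k hk hKS hKk
    have hconn : ∀ x ∈ insert k K, Relation.ReflTransGen (adjOn s t (insert k K)) k x := by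
      intro x hx
      rcases Finset.mem_insert.1 hx with rfl | hx
      · exact .refl
      · obtain ⟨z, hz, hzk⟩ := hKk x hx
        exact .head (adjOn_iff.2 ⟨Finset.mem_insert_self _ _, Finset.mem_insert_of_mem hz,
          hzk.symm⟩) (reach_mono (Finset.subset_insert _ _) (hK z hz x hx))
    have hconn' : ∀ x ∈ insert k K, ∀ y ∈ insert k K,
        Relation.ReflTransGen (adjOn s t (insert k K)) x y :=
      fun x hx y hy => (reach_symm (hconn x hx)).trans (hconn y hy)
    refine ⟨hconn', ?_⟩
    by_cases hnew : ∃ c ∈ C, Linked s t c k ∧ ∀ k' ∈ K, ¬ Linked s t c k'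
    · obtain ⟨c, hc, hck, hcK⟩ := hnew
      have hdisj : Disjoint C (insert k K) := by
        rw [Finset.disjoint_left]
        intro x hx hx'
        rcases Finset.mem_insert.1 hx' with rfl | hx'
        · exact (Finset.mem_sdiff.1 hk).2 hx
        · exact (Finset.mem_sdiff.1 (hKS hx')).2 hx
      obtain ⟨c', hc', hcc', hatt⟩ := attach_of_unique hnoloop hsimple horiented hC hdisj hconn'
        hc (Finset.mem_insert_self k K) hck (by
          intro k' hk' h
          rcases Finset.mem_insert.1 hk' with h' | h'
          · exact h'
          · exact absurd h (hcK k' h'))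
      exact ⟨c, hc, c', hc', hcc', hatt⟩
    · push Not at hnew
      refine ⟨y, hy, y', hy', hyy', fun c hc k' hk' h => ?_⟩
      rcases Finset.mem_insert.1 hk' with rfl | hk'
      · obtain ⟨k'', hk'', h''⟩ := hnew c hc h
        exact hN c hc k'' hk'' h''
      · exact hN c hc k' hk' h
  have hP0 : P ∅ := by
    obtain ⟨c, hc⟩ := hC.1
    obtain ⟨c₁, h₁, -, -, -, hc₁, -⟩ := hC.exists_nbrs hnoloop hsimple hc
    exact ⟨by simp, c, hc, c₁, h₁, hc₁, by simp⟩
  obtain ⟨x, hxS, hxC⟩ := Finset.exists_of_ssubset hCS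
  have hx : x ∈ S \ C := Finset.mem_sdiff.2 ⟨hxS, hxC⟩
  have hPx : P {x} := grow ∅ hP0 x hx (by simp) (by simp)
  let F := ((S \ C).powerset.filter fun K => K.Nonempty ∧ P K)
  have hF : F.Nonempty := by
    refine ⟨{x}, ?_⟩
    simp only [F, Finset.mem_filter, Finset.mem_powerset, Finset.singleton_subset_iff]
    exact ⟨hx, by simp, hPx⟩
  obtain ⟨K, hKF, hKmax⟩ := Finset.exists_max_image F Finset.card hF
  simp only [F, Finset.mem_filter, Finset.mem_powerset] at hKF hKmax
  obtain ⟨hKS, hKne, hPK⟩ := hKF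
  obtain ⟨y, hy, y', hy', hyy', hN⟩ := hPK.2
  refine ⟨K, hKS, hKne, y, hy, y', hy', hyy', fun d hdS hdK k hk hdk => ?_⟩
  by_cases hdC : d ∈ C
  · exact hN d hdC k hk hdk
  · have hd : d ∈ S \ C := Finset.mem_sdiff.2 ⟨hdS, hdC⟩
    have := hKmax (insert d K) ⟨Finset.insert_subset hd hKS, by simp,
      grow K hPK d hd hKS fun _ _ => ⟨k, hk, hdk.symm⟩⟩
    rw [Finset.card_insert_of_notMem hdK] at this
    omega

/-- A pair of adjacent vertices does not separate a chordless cycle. -/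
theorem IsOrientedChordlessCycle.reach_sdiff
    (hnoloop : ∀ a : A, s a ≠ t a)
    (hsimple : ∀ a b : A, ((s a = s b ∧ t a = t b) ∨ (s a = t b ∧ t a = s b)) → a = b)
    {C : Finset V} (hC : IsOrientedChordlessCycle s t C) {y y' : V} (hyy' : Linked s t y y')
    {u v : V} (hu : u ∈ C \ {y, y'}) (hv : v ∈ C \ {y, y'}) :
    Relation.ReflTransGen (adjOn s t (C \ {y, y'})) u v := by
  -- the case of a single vertex `c` in `C`
  have single : ∀ c ∈ C, ∀ u ∈ C \ {c}, ∀ v ∈ C \ {c},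
      Relation.ReflTransGen (adjOn s t (C \ {c})) u v := by
    intro c hc
    obtain ⟨c₁, h₁, c₂, h₂, h₁₂, hc₁, hc₂, hN⟩ := hC.1.exists_nbrs hnoloop hsimple hc
    have hsub : C \ {c, c₁} ⊆ C \ {c} := Finset.sdiff_subset_sdiff le_rfl (by simp)
    have hne : c₁ ≠ c := by
      rintro rfl
      exact not_linked_self hnoloop _ hc₁
    have main : ∀ u ∈ C \ {c}, Relation.ReflTransGen (adjOn s t (C \ {c})) u c₂ := by
      intro u hu
      have base : ∀ u ∈ C \ {c, c₁}, Relation.ReflTransGen (adjOn s t (C \ {c})) u c₂ :=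
        fun u hu => reach_mono hsub (hC.reach_sdiff_pair hsimple hc h₁ h₂ h₁₂ hc₁ hc₂ hu)
      by_cases huc : u = c₁
      · -- `c₁` has a neighbour `d` in `C` other than `c`
        subst huc
        obtain ⟨d, hd, hdc, hud⟩ : ∃ d ∈ C, d ≠ c ∧ Linked s t u d := by
          obtain ⟨d₁, hd₁, d₂, hd₂, hd, hl₁, hl₂, -⟩ := hC.1.exists_nbrs hnoloop hsimple h₁
          by_cases h : d₁ = c
          · exact ⟨d₂, hd₂, fun h' => hd (h.trans h'.symm), hl₂⟩
          · exact ⟨d₁, hd₁, h, hl₁⟩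
        have hdu : d ≠ u := by
          rintro rfl
          exact not_linked_self hnoloop _ hud
        exact .head (adjOn_iff.2 ⟨hu, by simp [hd, hdc], hud⟩) (base d (by simp [hd, hdc, hdu]))
      · exact base u (by simp at hu ⊢; tauto)
    exact fun u hu v hv => (main u hu).trans (reach_symm (main v hv))
  by_cases hy : y ∈ C
  · by_cases hy' : y' ∈ C
    · obtain ⟨c₂, h₂, hne, hyc₂⟩ : ∃ d ∈ C, y' ≠ d ∧ Linked s t y d := by
        obtain ⟨d₁, hd₁, d₂, hd₂, hd, hl₁, hl₂, -⟩ := hC.1.exists_nbrs hnoloop hsimple hy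
        by_cases h : y' = d₁
        · exact ⟨d₂, hd₂, fun h' => hd (h.symm.trans h'), hl₂⟩
        · exact ⟨d₁, hd₁, h, hl₁⟩
      exact (hC.reach_sdiff_pair hsimple hy hy' h₂ hne hyy' hyc₂ hu).trans
        (reach_symm (hC.reach_sdiff_pair hsimple hy hy' h₂ hne hyy' hyc₂ hv))
    · have : C \ {y, y'} = C \ {y} := by ext; simp; grind
      rw [this] at hu hv ⊢
      exact single y hy u hu v hv
  · by_cases hy' : y' ∈ C
    · have : C \ {y, y'} = C \ {y'} := by ext; simp; grind
      rw [this] at hu hv ⊢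
      exact single y' hy' u hu v hv
    · have : C \ {y, y'} = C := by ext; simp; grind
      rw [this] at hu hv ⊢
      exact hC.1.2.1 u hu v hv

/-- A chordless cycle contained in a chordless cycle is equal to it. -/
theorem IsChordlessCycle.eq_of_subset
    (hnoloop : ∀ a : A, s a ≠ t a)
    (hsimple : ∀ a b : A, ((s a = s b ∧ t a = t b) ∨ (s a = t b ∧ t a = s b)) → a = b)
    {C D : Finset V} (hC : IsChordlessCycle s t C) (hD : IsChordlessCycle s t D) (h : D ⊆ C) :
    D = C := by
  refine Finset.Subset.antisymm h fun x hx => ?_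
  obtain ⟨d, hd⟩ := hD.1
  refine reach_closed (P := (· ∈ D)) (hC.2.1 d (h hd) x hx) hd ?_
  intro u hu v hv huv huD
  obtain ⟨c₁, -, c₂, -, -, -, -, hN⟩ := hC.exists_nbrs hnoloop hsimple hu
  obtain ⟨d₁, h₁, d₂, h₂, h₁₂, hl₁, hl₂, -⟩ := hD.exists_nbrs hnoloop hsimple huD
  have e1 := hN d₁ (h h₁) hl₁
  have e2 := hN d₂ (h h₂) hl₂
  have e3 := hN v hv huv
  have : v = d₁ ∨ v = d₂ := by grind
  rcases this with rfl | rfl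
  exacts [h₁, h₂]

/-! ### Gluing cuts -/

/-- Admissible cuts exist on every full subquiver, and membership of one arrow `e` can be
prescribed arbitrarily. The prescription is what allows to glue the cuts of the two sides of a
separation along an edge. -/
theorem exists_cut_prescribed [DecidableEq A]
    (hnoloop : ∀ a : A, s a ≠ t a)
    (hsimple : ∀ a b : A, ((s a = s b ∧ t a = t b) ∨ (s a = t b ∧ t a = s b)) → a = b)
    (horiented : ∀ S : Finset V, IsChordlessCycle s t S → IsOrientedChordlessCycle s t S)
    (n : ℕ) : ∀ S : Finset V, S.card = n → ∀ (e : A) (b : Prop), ∃ Δ : Finset A, (e ∈ Δ ↔ b) ∧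
      ∀ C ⊆ S, IsChordlessCycle s t C →
        ((fullArrows s t C).filter fun a => a ∈ Δ).card = 1 := by
  classical
  induction n using Nat.strong_induction_on with
  | _ n ih =>
  intro S hS e b
  by_cases hex : ∃ C ⊆ S, IsChordlessCycle s t C
  swap
  · push Not at hex
    exact ⟨if b then {e} else ∅, by split_ifs <;> simp [*],
      fun C hCS hC => absurd hC (hex C hCS)⟩
  obtain ⟨C, hCS, hC⟩ := hex
  by_cases hCeq : C = S
  · subst hCeq
    obtain ⟨e', he', hee'⟩ : ∃ e' ∈ fullArrows s t C, e' ≠ e := by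
      obtain ⟨c, hc⟩ := hC.1
      have h2 := hC.2.2 c hc
      obtain ⟨x, y, hxy, hf⟩ := Finset.card_eq_two.1 h2
      have hx : x ∈ fullArrows s t C := by
        have h : x ∈ ({x, y} : Finset A) := by simp
        rw [← hf] at h
        exact (Finset.mem_filter.1 h).1
      have hy : y ∈ fullArrows s t C := by
        have h : y ∈ ({x, y} : Finset A) := by simp
        rw [← hf] at h
        exact (Finset.mem_filter.1 h).1
      by_cases h : x = e
      · exact ⟨y, hy, fun h' => hxy (h.trans h'.symm)⟩
      · exact ⟨x, hx, h⟩
    suffices h : ∃ Δ : Finset A, (e ∈ Δ ↔ b) ∧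
        ((fullArrows s t C).filter fun a => a ∈ Δ).card = 1 by
      obtain ⟨Δ, h1, h2⟩ := h
      refine ⟨Δ, h1, fun D hDC hD => ?_⟩
      rwa [hC.eq_of_subset hnoloop hsimple hD hDC]
    by_cases hb : b
    · by_cases he : e ∈ fullArrows s t C
      · refine ⟨{e}, by simp [hb], Finset.card_eq_one.2 ⟨e, ?_⟩⟩
        ext x
        simp only [Finset.mem_filter, Finset.mem_singleton]
        grind
      · refine ⟨{e, e'}, by simp [hb], Finset.card_eq_one.2 ⟨e', ?_⟩⟩
        ext x
        simp only [Finset.mem_filter, Finset.mem_singleton, Finset.mem_insert]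
        grind
    · refine ⟨{e'}, by simp [hb, hee'.symm], Finset.card_eq_one.2 ⟨e', ?_⟩⟩
      ext x
      simp only [Finset.mem_filter, Finset.mem_singleton]
      grind
  obtain ⟨K, hKS, hKne, y, hy, y', hy', hyy', hsep⟩ :=
    exists_separation hnoloop hsimple horiented hC (hCS.ssubset_of_ne hCeq)
  -- the two sides of the separation
  let S₁ := K ∪ {y, y'}
  let S₂ := S \ K
  have hKS' : K ⊆ S := hKS.trans Finset.sdiff_subset
  have hKC : ∀ c ∈ C, c ∉ K := fun c hc hcK => (Finset.mem_sdiff.1 (hKS hcK)).2 hc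
  obtain ⟨z, hz, hzy, hzy'⟩ : ∃ z ∈ C, z ≠ y ∧ z ≠ y' := by
    obtain ⟨d₁, hd₁, d₂, hd₂, hd, hl₁, hl₂, -⟩ := hC.exists_nbrs hnoloop hsimple hy
    have n1 : d₁ ≠ y := by rintro rfl; exact not_linked_self hnoloop _ hl₁
    have n2 : d₂ ≠ y := by rintro rfl; exact not_linked_self hnoloop _ hl₂
    by_cases h : d₁ = y'
    · exact ⟨d₂, hd₂, n2, fun h' => hd (h.trans h'.symm)⟩
    · exact ⟨d₁, hd₁, n1, h⟩
  have hc₁ : S₁.card < n := by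
    rw [← hS]
    refine Finset.card_lt_card ((Finset.ssubset_iff_of_subset ?_).2 ⟨z, hCS hz, ?_⟩)
    · intro x hx
      simp only [S₁, Finset.mem_union, Finset.mem_insert, Finset.mem_singleton] at hx
      rcases hx with hx | rfl | rfl
      exacts [hKS' hx, hCS hy, hCS hy']
    · simp [S₁, hKC z hz, hzy, hzy']
  have hc₂ : S₂.card < n := by
    rw [← hS]
    obtain ⟨k, hk⟩ := hKne
    exact Finset.card_lt_card ((Finset.ssubset_iff_of_subset Finset.sdiff_subset).2
      ⟨k, hKS' hk, by simp [hk]⟩)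
  have hside : ∀ D ⊆ S, IsChordlessCycle s t D → D ⊆ S₁ ∨ D ⊆ S₂ := by
    intro D hDS hD
    by_contra hcon
    push Not at hcon
    obtain ⟨⟨w, hw, hw'⟩, ⟨k, hk, hk'⟩⟩ :=
      (⟨Finset.not_subset.1 hcon.1, Finset.not_subset.1 hcon.2⟩ : _ ∧ _)
    simp only [S₁, S₂, Finset.mem_union, Finset.mem_insert, Finset.mem_singleton, not_or,
      Finset.mem_sdiff, not_and, not_not] at hw' hk'
    have hkK := hk' (hDS hk)
    have hky : k ≠ y := by rintro rfl; exact hKC _ hy hkK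
    have hky' : k ≠ y' := by rintro rfl; exact hKC _ hy' hkK
    refine hw'.1 (reach_closed (P := (· ∈ K)) ((horiented D hD).reach_sdiff hnoloop hsimple hyy'
      (u := k) (v := w) (by simp [hk, hky, hky']) (by simp [hw, hw'.2])) hkK ?_)
    intro u _ v hv huv huK
    simp only [Finset.mem_sdiff, Finset.mem_insert, Finset.mem_singleton, not_or] at hv
    by_contra hvK
    rcases hsep v (hDS hv.1) hvK u huK huv.symm with h | h
    exacts [hv.2.1 h, hv.2.2 h]
  obtain ⟨f, hf⟩ : ∃ f : A, (s f = y ∧ t f = y') ∨ (s f = y' ∧ t f = y) := by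
    rcases hyy' with ⟨f, hf⟩ | ⟨f, hf⟩
    exacts [⟨f, Or.inl hf⟩, ⟨f, Or.inr hf⟩]
  have hinter : ∀ a, a ∈ fullArrows s t S₁ → a ∈ fullArrows s t S₂ → a = f := by
    intro a h1 h2
    rw [mem_fullArrows] at h1 h2
    simp only [S₁, S₂, Finset.mem_union, Finset.mem_insert, Finset.mem_singleton,
      Finset.mem_sdiff] at h1 h2
    have := hnoloop a
    exact hsimple a f (by grind)
  have hfull : ∀ {D T : Finset V} {a : A}, D ⊆ T → a ∈ fullArrows s t D →
      a ∈ fullArrows s t T := by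
    intro D T a hDT ha
    rw [mem_fullArrows] at ha ⊢
    exact ⟨hDT ha.1, hDT ha.2⟩
  -- cuts on the two sides that agree on the common edge `f`
  obtain ⟨Δ₁, Δ₂, hΔ, he₁, he₂, hΔ₁, hΔ₂⟩ : ∃ Δ₁ Δ₂ : Finset A, (f ∈ Δ₁ ↔ f ∈ Δ₂) ∧
      (e ∈ fullArrows s t S₁ → (e ∈ Δ₁ ↔ b)) ∧ (e ∉ fullArrows s t S₁ → (e ∈ Δ₂ ↔ b)) ∧
      (∀ D ⊆ S₁, IsChordlessCycle s t D →
        ((fullArrows s t D).filter fun a => a ∈ Δ₁).card = 1) ∧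
      (∀ D ⊆ S₂, IsChordlessCycle s t D →
        ((fullArrows s t D).filter fun a => a ∈ Δ₂).card = 1) := by
    by_cases he : e ∈ fullArrows s t S₁
    · obtain ⟨Δ₁, h1, h1'⟩ := ih _ hc₁ S₁ rfl e b
      obtain ⟨Δ₂, h2, h2'⟩ := ih _ hc₂ S₂ rfl f (f ∈ Δ₁)
      exact ⟨Δ₁, Δ₂, h2.symm, fun _ => h1, fun h => absurd he h, h1', h2'⟩
    · obtain ⟨Δ₂, h2, h2'⟩ := ih _ hc₂ S₂ rfl e b
      obtain ⟨Δ₁, h1, h1'⟩ := ih _ hc₁ S₁ rfl f (f ∈ Δ₂)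
      exact ⟨Δ₁, Δ₂, h1, fun h => absurd h he, fun _ => h2, h1', h2'⟩
  let Δ : Finset A := Finset.univ.filter fun a =>
    (a ∈ fullArrows s t S₁ ∧ a ∈ Δ₁) ∨ (a ∉ fullArrows s t S₁ ∧ a ∈ Δ₂)
  have hmem : ∀ a, a ∈ Δ ↔
      (a ∈ fullArrows s t S₁ ∧ a ∈ Δ₁) ∨ (a ∉ fullArrows s t S₁ ∧ a ∈ Δ₂) := by
    intro a
    simp only [Δ, Finset.mem_filter, Finset.mem_univ, true_and]
  have hmem₁ : ∀ a, a ∈ fullArrows s t S₁ → (a ∈ Δ ↔ a ∈ Δ₁) := by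
    intro a ha
    simp only [hmem, ha, true_and, not_true_eq_false, false_and, or_false]
  have hmem₂ : ∀ a, a ∉ fullArrows s t S₁ → (a ∈ Δ ↔ a ∈ Δ₂) := by
    intro a ha
    simp only [hmem, ha, not_false_eq_true, true_and, false_and, false_or]
  refine ⟨Δ, ?_, fun D hDS hD => ?_⟩
  · by_cases he : e ∈ fullArrows s t S₁
    · exact (hmem₁ e he).trans (he₁ he)
    · exact (hmem₂ e he).trans (he₂ he)
  · rcases hside D hDS hD with h | h
    · rw [← hΔ₁ D h hD]
      exact congrArg Finset.card (Finset.filter_congr fun a ha => hmem₁ a (hfull h ha))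
    · rw [← hΔ₂ D h hD]
      refine congrArg Finset.card (Finset.filter_congr fun a ha => ?_)
      by_cases h1 : a ∈ fullArrows s t S₁
      · obtain rfl := hinter a h1 (hfull h ha)
        exact (hmem₁ a h1).trans hΔ
      · exact hmem₂ a h1

end Cycles

/-- a finite connected quiver without loops, with at most one arrow between
any two vertices (in either direction), in which every chordless cycle is oriented and
which admits a positive definite quasi-Cartan companion, admits an admissible cut. -/
theorem stmt_7 {V A : Type*} [Fintype V] [DecidableEq V] [Fintype A] [DecidableEq A]
    (s t : A → V)
    (hnoloop : ∀ a : A, s a ≠ t a)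
    (hsimple : ∀ a b : A,
      ((s a = s b ∧ t a = t b) ∨ (s a = t b ∧ t a = s b)) → a = b)
    (hconn : ∀ u v : V,
      Relation.ReflTransGen
        (fun x y => ∃ a : A, (s a = x ∧ t a = y) ∨ (s a = y ∧ t a = x)) u v)
    (horiented : ∀ S : Finset V,
      IsChordlessCycle s t S → IsOrientedChordlessCycle s t S)
    (hQC : ∃ M : Matrix V V ℤ, IsQuasiCartanCompanion s t M ∧ PosDefInt M) :
    ∃ Δ : Finset A, IsAdmissibleCut s t Δ := by
  have key := exists_cut_prescribed hnoloop hsimple horiented _ Finset.univ rfl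
  by_cases hA : Nonempty A
  · obtain ⟨e⟩ := hA
    obtain ⟨Δ, -, h⟩ := key e True
    exact ⟨Δ, fun C hC => h C (Finset.subset_univ C) hC.1⟩
  · -- a quiver without arrows has no cycles
    refine ⟨∅, fun C hC => ?_⟩
    obtain ⟨c, hc⟩ := hC.1.1
    obtain ⟨a, -⟩ := Finset.card_eq_one.1 (hC.2 c hc).1
    exact absurd ⟨a⟩ hA
end
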